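/- arXiv:2603.15193 — 6 statements merged into one kernel-verified Lean document; each statement's English description precedes it below -/
import Mathlib

section
/- Let α > 1 and s > 3/2, and let p : [0,∞) → ℝ satisfy Assumption (H_α) with parameters 0 < c₁ < c₂ and c₃ > 0. Then for every T > 0 there exists a constant C(T) > 0 such that for every finitely supported sequence (c_n)_{n∈ℤ} of complex numbers, ∫₀^T |∑_{n∈ℤ} c_n e^{2πi(n·p(t) + |n|^s·t)}|² dt ≤ C(T) · ∑_{n∈ℤ} |c_n|². -/
open MeasureTheory Set

/-- Assumption `(H_α)` with parameters `0 < c₁ < c₂` and `c₃ > 0`: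
`p` is `C¹` on `[0,∞)`, `C²` on `(0,∞)`, with
`c₁ t^{α-1} ≤ |p'(t)| ≤ c₂ t^{α-1}` for `t ≥ 0` and `|p''(t)| ≥ c₃ t^{α-2}` for `t > 0`. -/
def AssumptionH (α c₁ c₂ c₃ : ℝ) (p : ℝ → ℝ) : Prop :=
  ContDiffOn ℝ 1 p (Set.Ici 0) ∧ ContDiffOn ℝ 2 p (Set.Ioi 0) ∧
  (∀ t : ℝ, 0 ≤ t → c₁ * t ^ (α - 1) ≤ |deriv p t| ∧ |deriv p t| ≤ c₂ * t ^ (α - 1)) ∧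
  (∀ t : ℝ, 0 < t → c₃ * t ^ (α - 2) ≤ |deriv (deriv p) t|)

/-!
Expanding the square reduces the inequality to the Gram matrix of the modes, whose `(n, m)` entry is
an oscillatory integral with phase `D p(t) + L t`, where `D = 2π (n - m)` and
`L = 2π (|n|^s - |m|^s)`. With `j = ||n| - |m||` and `X = max |n| |m|` one has `|L| ≥ j X^(s-1)` and
`|D| ≤ 4π X`. If `|L|` is large compared with `|D|`, the phase has no stationary point and the
first-derivative test bounds the entry by `O(1 / |L|)`. Otherwise `|L| = O(X)`; since `|p''|`
dominates a multiple of `|p'|`, the phase is curved wherever it is nearly stationary, and the entry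
is `O(1 / √|L|)`. For `s > 3/2` both bounds are `O(j^(-(s - 1/2)))` with a summable exponent, so
Schur's test applies.
-/

open scoped ComplexConjugate Real

section OscillatoryIntegrals

variable {a b : ℝ}

lemma integral_abs_deriv_of_ne_zero {G G' : ℝ → ℝ} (hab : a ≤ b)
    (hG : ∀ t ∈ Icc a b, HasDerivAt G (G' t) t) (hG'_cont : ContinuousOn G' (Icc a b))
    (hG'_ne : ∀ t ∈ Icc a b, G' t ≠ 0) :
    ∫ t in a..b, |G' t| = |G b - G a| := by
  have huIcc : uIcc a b = Icc a b := uIcc_of_le hab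
  rw [← intervalIntegral.integral_eq_sub_of_hasDerivAt (huIcc ▸ hG)
    (huIcc ▸ hG'_cont).intervalIntegrable]
  rcases hasDerivWithinAt_forall_lt_or_forall_gt_of_forall_ne (convex_Icc a b)
    (fun t ht => (hG t ht).hasDerivWithinAt) hG'_ne with hneg | hpos
  · have habs : ∫ t in a..b, |G' t| = -∫ t in a..b, G' t := by
      rw [← intervalIntegral.integral_neg]
      exact intervalIntegral.integral_congr fun t ht => abs_of_neg (hneg t (huIcc ▸ ht))
    have := intervalIntegral.integral_nonneg (μ := volume) hab fun t _ => abs_nonneg (G' t)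
    rw [habs, abs_of_nonpos (by linarith)]
  · have habs : ∫ t in a..b, |G' t| = ∫ t in a..b, G' t :=
      intervalIntegral.integral_congr fun t ht => abs_of_pos (hpos t (huIcc ▸ ht))
    rw [habs, abs_of_nonneg (intervalIntegral.integral_nonneg hab fun t ht => (hpos t ht).le)]

lemma norm_integral_mul_cexp_le (hab : a ≤ b) (φ f : ℝ → ℝ) :
    ‖∫ t in a..b, f t * Complex.exp (φ t * Complex.I)‖ ≤ ∫ t in a..b, |f t| :=
  (intervalIntegral.norm_integral_le_integral_norm hab).trans_eq <| by
    simp only [norm_mul, Complex.norm_exp_ofReal_mul_I, mul_one, Complex.norm_real,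
      Real.norm_eq_abs]

variable {φ φ' φ'' : ℝ → ℝ}

lemma norm_integral_deriv_mul_mul_cexp_le {H H' : ℝ → ℝ} (hab : a ≤ b)
    (hφ : ∀ t ∈ Icc a b, HasDerivAt φ (φ' t) t) (hφ'_cont : ContinuousOn φ' (Icc a b))
    (hH : ∀ t ∈ Icc a b, HasDerivAt H (H' t) t) (hH'_cont : ContinuousOn H' (Icc a b)) :
    ‖∫ t in a..b, (φ' t * H t : ℝ) * Complex.exp (φ t * Complex.I)‖ ≤
      |H a| + |H b| + ∫ t in a..b, |H' t| := by
  have huIcc : uIcc a b = Icc a b := uIcc_of_le hab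
  have hφ_cont : ContinuousOn φ (Icc a b) := HasDerivAt.continuousOn hφ
  have hparts := intervalIntegral.integral_mul_deriv_eq_deriv_mul (a := a) (b := b)
    (u := fun t => (H t : ℂ)) (v := fun t => Complex.exp (φ t * Complex.I))
    (fun t ht => (hH t (huIcc ▸ ht)).ofReal_comp)
    (fun t ht => ((hφ t (huIcc ▸ ht)).ofReal_comp.mul_const Complex.I).cexp)
    (ContinuousOn.intervalIntegrable (by rw [huIcc]; fun_prop))
    (ContinuousOn.intervalIntegrable (by rw [huIcc]; fun_prop))
  have hmul_I : (∫ t in a..b, (φ' t * H t : ℝ) * Complex.exp (φ t * Complex.I)) * Complex.I =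
      H b * Complex.exp (φ b * Complex.I) - H a * Complex.exp (φ a * Complex.I) -
        ∫ t in a..b, H' t * Complex.exp (φ t * Complex.I) := by
    rw [← hparts, ← intervalIntegral.integral_mul_const]
    congr 1 with t
    push_cast
    ring
  calc ‖∫ t in a..b, (φ' t * H t : ℝ) * Complex.exp (φ t * Complex.I)‖
      = ‖(∫ t in a..b, (φ' t * H t : ℝ) * Complex.exp (φ t * Complex.I)) * Complex.I‖ := by
        rw [norm_mul, Complex.norm_I, mul_one]
    _ ≤ ‖H b * Complex.exp (φ b * Complex.I)‖ + ‖H a * Complex.exp (φ a * Complex.I)‖ +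
          ‖∫ t in a..b, H' t * Complex.exp (φ t * Complex.I)‖ := by
        rw [hmul_I]
        exact (norm_sub_le _ _).trans (add_le_add_left (norm_sub_le _ _) _)
    _ ≤ |H b| + |H a| + ∫ t in a..b, |H' t| := by
        simp only [norm_mul, Complex.norm_exp_ofReal_mul_I, mul_one, Complex.norm_real,
          Real.norm_eq_abs]
        gcongr
        exact norm_integral_mul_cexp_le hab φ H'
    _ = |H a| + |H b| + ∫ t in a..b, |H' t| := by rw [add_comm |H b|]

/- Integration by parts needs a factor `φ'`, so `1` is split as `φ' * H + (1 - φ' * H)`, where `H`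
is a stand-in for `1 / φ'` that may be chosen bounded near the zeros of `φ'`. -/
lemma norm_integral_cexp_le_add_integral_abs {H H' : ℝ → ℝ} (hab : a ≤ b)
    (hφ : ∀ t ∈ Icc a b, HasDerivAt φ (φ' t) t) (hφ'_cont : ContinuousOn φ' (Icc a b))
    (hH : ∀ t ∈ Icc a b, HasDerivAt H (H' t) t) (hH'_cont : ContinuousOn H' (Icc a b)) :
    ‖∫ t in a..b, Complex.exp (φ t * Complex.I)‖ ≤
      |H a| + |H b| + (∫ t in a..b, |H' t|) + ∫ t in a..b, |1 - φ' t * H t| := by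
  have huIcc : uIcc a b = Icc a b := uIcc_of_le hab
  have hφ_cont : ContinuousOn φ (Icc a b) := HasDerivAt.continuousOn hφ
  have hH_cont : ContinuousOn H (Icc a b) := HasDerivAt.continuousOn hH
  have hsplit : ∫ t in a..b, Complex.exp (φ t * Complex.I) =
      (∫ t in a..b, (φ' t * H t : ℝ) * Complex.exp (φ t * Complex.I)) +
        ∫ t in a..b, (1 - φ' t * H t : ℝ) * Complex.exp (φ t * Complex.I) := by
    rw [← intervalIntegral.integral_add
      (ContinuousOn.intervalIntegrable (by rw [huIcc]; fun_prop))
      (ContinuousOn.intervalIntegrable (by rw [huIcc]; fun_prop))]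
    congr 1 with t
    push_cast
    ring
  rw [hsplit]
  exact (norm_add_le _ _).trans <| add_le_add
    (norm_integral_deriv_mul_mul_cexp_le hab hφ hφ'_cont hH hH'_cont)
    (norm_integral_mul_cexp_le hab φ _)

lemma norm_integral_cexp_le_of_le_abs_deriv {l : ℝ} (hab : a ≤ b) (hl : 0 < l)
    (hφ : ∀ t ∈ Icc a b, HasDerivAt φ (φ' t) t) (hφ' : ∀ t ∈ Icc a b, HasDerivAt φ' (φ'' t) t)
    (hφ''_cont : ContinuousOn φ'' (Icc a b)) (hφ''_ne : ∀ t ∈ Icc a b, φ'' t ≠ 0)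
    (hφ'_le : ∀ t ∈ Icc a b, l ≤ |φ' t|) :
    ‖∫ t in a..b, Complex.exp (φ t * Complex.I)‖ ≤ 4 / l := by
  have hφ'_cont : ContinuousOn φ' (Icc a b) := HasDerivAt.continuousOn hφ'
  have hφ'_ne : ∀ t ∈ Icc a b, φ' t ≠ 0 := fun t ht => abs_pos.1 (hl.trans_le (hφ'_le t ht))
  have hinv : ∀ t ∈ Icc a b, HasDerivAt (fun t => (φ' t)⁻¹) (-φ'' t / φ' t ^ 2) t :=
    fun t ht => (hφ' t ht).inv (hφ'_ne t ht)
  have hinv_cont : ContinuousOn (fun t => -φ'' t / φ' t ^ 2) (Icc a b) :=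
    hφ''_cont.neg.div (hφ'_cont.pow 2) fun t ht => pow_ne_zero 2 (hφ'_ne t ht)
  have hinv_le : ∀ t ∈ Icc a b, |(φ' t)⁻¹| ≤ l⁻¹ := fun t ht => by
    rw [abs_inv]
    exact inv_anti₀ hl (hφ'_le t ht)
  have hvar : ∫ t in a..b, |-φ'' t / φ' t ^ 2| = |(φ' b)⁻¹ - (φ' a)⁻¹| :=
    integral_abs_deriv_of_ne_zero hab hinv hinv_cont fun t ht =>
      div_ne_zero (neg_ne_zero.2 (hφ''_ne t ht)) (pow_ne_zero 2 (hφ'_ne t ht))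
  have hrem : ∫ t in a..b, |1 - φ' t * (φ' t)⁻¹| = 0 :=
    intervalIntegral.integral_zero_ae <| .of_forall fun t ht => by
      rw [mul_inv_cancel₀ (hφ'_ne t (Ioc_subset_Icc_self (uIoc_of_le hab ▸ ht))), sub_self,
        abs_zero]
  have hparts := norm_integral_cexp_le_add_integral_abs hab hφ hφ'_cont hinv hinv_cont
  have ha := hinv_le a (left_mem_Icc.2 hab)
  have hb := hinv_le b (right_mem_Icc.2 hab)
  have htri := abs_sub (φ' b)⁻¹ (φ' a)⁻¹
  rw [hvar, hrem] at hparts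
  rw [div_eq_mul_inv]
  linarith

section SecondDerivative

variable {δ : ℝ}

lemma integral_abs_deriv_div_sq_add_sq_le (hab : a ≤ b) (hδ : 0 < δ)
    (hφ' : ∀ t ∈ Icc a b, HasDerivAt φ' (φ'' t) t) (hφ''_cont : ContinuousOn φ'' (Icc a b))
    (hφ''_ne : ∀ t ∈ Icc a b, φ'' t ≠ 0) :
    ∫ t in a..b, |φ'' t / (φ' t ^ 2 + δ ^ 2)| ≤ π / δ := by
  have hφ'_cont : ContinuousOn φ' (Icc a b) := HasDerivAt.continuousOn hφ'
  have hpos : ∀ t, 0 < φ' t ^ 2 + δ ^ 2 := fun t => by positivity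
  have harctan : ∀ t ∈ Icc a b, HasDerivAt (fun t => Real.arctan (φ' t / δ) / δ)
      (φ'' t / (φ' t ^ 2 + δ ^ 2)) t := fun t ht => by
    refine (((hφ' t ht).div_const δ).arctan.div_const δ).congr_deriv ?_
    have := (hpos t).ne'
    field_simp
    ring
  rw [integral_abs_deriv_of_ne_zero hab harctan
    (hφ''_cont.div (by fun_prop) fun t _ => (hpos t).ne')
    fun t ht => div_ne_zero (hφ''_ne t ht) (hpos t).ne', ← sub_div, abs_div, abs_of_pos hδ]
  gcongr
  rw [abs_le]
  constructor <;>
    linarith [Real.neg_pi_div_two_lt_arctan (φ' a / δ), Real.arctan_lt_pi_div_two (φ' a / δ),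
      Real.neg_pi_div_two_lt_arctan (φ' b / δ), Real.arctan_lt_pi_div_two (φ' b / δ)]

lemma abs_div_sq_add_sq_le (hδ : 0 < δ) (x : ℝ) : |x / (x ^ 2 + δ ^ 2)| ≤ 1 / δ := by
  have hpos : 0 < x ^ 2 + δ ^ 2 := by positivity
  rw [abs_div, abs_of_pos hpos, div_le_div_iff₀ hpos hδ, ← sq_abs x]
  nlinarith [sq_nonneg (|x| - δ), abs_nonneg x]

lemma abs_mul_sq_sub_sq_div_le (hδ : 0 < δ) (x y : ℝ) :
    |y * (δ ^ 2 - x ^ 2) / (x ^ 2 + δ ^ 2) ^ 2| ≤ |y / (x ^ 2 + δ ^ 2)| := by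
  have hpos : 0 < x ^ 2 + δ ^ 2 := by positivity
  have hle_one : |(δ ^ 2 - x ^ 2) / (x ^ 2 + δ ^ 2)| ≤ 1 := by
    rw [abs_div, abs_of_pos hpos, div_le_one hpos, abs_le]
    constructor <;> linarith [sq_nonneg x, sq_nonneg δ]
  rw [sq (x ^ 2 + δ ^ 2), mul_div_mul_comm, abs_mul]
  exact mul_le_of_le_one_right (abs_nonneg _) hle_one

/- The test function is `H = φ' / (φ' ^ 2 + δ ^ 2)`: it agrees with `1 / φ'` where `|φ'|` is much
larger than `δ`, and the derivative bounding its variation integrates to an arctangent. -/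
lemma norm_integral_cexp_le_add_integral_div_sq_add_sq (hab : a ≤ b) (hδ : 0 < δ)
    (hφ : ∀ t ∈ Icc a b, HasDerivAt φ (φ' t) t) (hφ' : ∀ t ∈ Icc a b, HasDerivAt φ' (φ'' t) t)
    (hφ''_cont : ContinuousOn φ'' (Icc a b)) (hφ''_ne : ∀ t ∈ Icc a b, φ'' t ≠ 0) :
    ‖∫ t in a..b, Complex.exp (φ t * Complex.I)‖ ≤
      (2 + π) / δ + ∫ t in a..b, δ ^ 2 / (φ' t ^ 2 + δ ^ 2) := by
  have huIcc : uIcc a b = Icc a b := uIcc_of_le hab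
  have hφ'_cont : ContinuousOn φ' (Icc a b) := HasDerivAt.continuousOn hφ'
  have hpos : ∀ t, 0 < φ' t ^ 2 + δ ^ 2 := fun t => by positivity
  have hH : ∀ t ∈ Icc a b, HasDerivAt (fun t => φ' t / (φ' t ^ 2 + δ ^ 2))
      (φ'' t * (δ ^ 2 - φ' t ^ 2) / (φ' t ^ 2 + δ ^ 2) ^ 2) t := fun t ht => by
    refine ((hφ' t ht).div (((hφ' t ht).fun_pow 2).add_const (δ ^ 2)) (hpos t).ne').congr_deriv ?_
    push_cast
    ring
  have hH'_cont : ContinuousOn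
      (fun t => φ'' t * (δ ^ 2 - φ' t ^ 2) / (φ' t ^ 2 + δ ^ 2) ^ 2) (Icc a b) :=
    ContinuousOn.div (by fun_prop) (by fun_prop) fun t _ => pow_ne_zero 2 (hpos t).ne'
  have hvar_cont : ContinuousOn (fun t => φ'' t / (φ' t ^ 2 + δ ^ 2)) (Icc a b) :=
    hφ''_cont.div (by fun_prop) fun t _ => (hpos t).ne'
  have hvar : ∫ t in a..b, |φ'' t * (δ ^ 2 - φ' t ^ 2) / (φ' t ^ 2 + δ ^ 2) ^ 2| ≤ π / δ :=
    (intervalIntegral.integral_mono_on hab (huIcc ▸ hH'_cont.abs).intervalIntegrable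
      (huIcc ▸ hvar_cont.abs).intervalIntegrable
      fun t _ => abs_mul_sq_sub_sq_div_le hδ (φ' t) (φ'' t)).trans
    (integral_abs_deriv_div_sq_add_sq_le hab hδ hφ' hφ''_cont hφ''_ne)
  have hrem : ∀ t, |1 - φ' t * (φ' t / (φ' t ^ 2 + δ ^ 2))| = δ ^ 2 / (φ' t ^ 2 + δ ^ 2) :=
    fun t => by
      rw [← mul_div_assoc, ← sq, one_sub_div (hpos t).ne', add_sub_cancel_left,
        abs_of_nonneg (by positivity)]
  have hparts := norm_integral_cexp_le_add_integral_abs hab hφ hφ'_cont hH hH'_cont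
  simp only [hrem] at hparts
  have ha := abs_div_sq_add_sq_le hδ (φ' a)
  have hb := abs_div_sq_add_sq_le hδ (φ' b)
  have hconst : (2 + π) / δ = 1 / δ + 1 / δ + π / δ := by ring
  linarith

lemma sq_div_sq_add_sq_le {m ρ x y : ℝ} (hδ : 0 < δ) (hm : 0 < m) (hρ : 0 < ρ)
    (h : m ≤ |x| ∨ ρ ≤ |y|) :
    δ ^ 2 / (x ^ 2 + δ ^ 2) ≤ (δ / m) ^ 2 + δ ^ 2 / ρ * |y / (x ^ 2 + δ ^ 2)| := by
  have hpos : 0 < x ^ 2 + δ ^ 2 := by positivity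
  rcases h with hx | hy
  · have hmx : m ^ 2 ≤ x ^ 2 + δ ^ 2 := by
      nlinarith [pow_le_pow_left₀ hm.le hx 2, sq_abs x, sq_nonneg δ]
    calc δ ^ 2 / (x ^ 2 + δ ^ 2) ≤ δ ^ 2 / m ^ 2 := by gcongr
      _ = (δ / m) ^ 2 := (div_pow δ m 2).symm
      _ ≤ _ := le_add_of_nonneg_right (by positivity)
  · calc δ ^ 2 / (x ^ 2 + δ ^ 2) = δ ^ 2 / ρ * (ρ / (x ^ 2 + δ ^ 2)) := by field_simp
      _ ≤ δ ^ 2 / ρ * |y / (x ^ 2 + δ ^ 2)| := by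
        rw [abs_div, abs_of_pos hpos]
        gcongr
      _ ≤ _ := le_add_of_nonneg_left (by positivity)

lemma norm_integral_cexp_le_of_le_abs_deriv_or_le_abs_deriv2 {m ρ : ℝ} (hab : a ≤ b)
    (hδ : 0 < δ) (hm : 0 < m) (hρ : 0 < ρ)
    (hφ : ∀ t ∈ Icc a b, HasDerivAt φ (φ' t) t) (hφ' : ∀ t ∈ Icc a b, HasDerivAt φ' (φ'' t) t)
    (hφ''_cont : ContinuousOn φ'' (Icc a b)) (hφ''_ne : ∀ t ∈ Icc a b, φ'' t ≠ 0)
    (hle : ∀ t ∈ Icc a b, m ≤ |φ' t| ∨ ρ ≤ |φ'' t|) :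
    ‖∫ t in a..b, Complex.exp (φ t * Complex.I)‖ ≤
      (2 + π) / δ + (b - a) * (δ / m) ^ 2 + π * δ / ρ := by
  have huIcc : uIcc a b = Icc a b := uIcc_of_le hab
  have hφ'_cont : ContinuousOn φ' (Icc a b) := HasDerivAt.continuousOn hφ'
  have hpos : ∀ t, 0 < φ' t ^ 2 + δ ^ 2 := fun t => by positivity
  have hvar_int : IntervalIntegrable (fun t => |φ'' t / (φ' t ^ 2 + δ ^ 2)|) volume a b := by
    refine ContinuousOn.intervalIntegrable (huIcc ▸ ContinuousOn.abs ?_)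
    exact hφ''_cont.div (by fun_prop) fun t _ => (hpos t).ne'
  have hrem_int : IntervalIntegrable (fun t => δ ^ 2 / (φ' t ^ 2 + δ ^ 2)) volume a b := by
    refine ContinuousOn.intervalIntegrable (huIcc ▸ ?_)
    exact continuousOn_const.div (by fun_prop) fun t _ => (hpos t).ne'
  have hrem : ∫ t in a..b, δ ^ 2 / (φ' t ^ 2 + δ ^ 2) ≤ (b - a) * (δ / m) ^ 2 + π * δ / ρ :=
    calc ∫ t in a..b, δ ^ 2 / (φ' t ^ 2 + δ ^ 2)
        ≤ ∫ t in a..b, ((δ / m) ^ 2 + δ ^ 2 / ρ * |φ'' t / (φ' t ^ 2 + δ ^ 2)|) :=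
          intervalIntegral.integral_mono_on hab hrem_int
            (intervalIntegrable_const.add (hvar_int.const_mul _))
            fun t ht => sq_div_sq_add_sq_le hδ hm hρ (hle t ht)
      _ = (b - a) * (δ / m) ^ 2 + δ ^ 2 / ρ * ∫ t in a..b, |φ'' t / (φ' t ^ 2 + δ ^ 2)| := by
          rw [intervalIntegral.integral_add intervalIntegrable_const (hvar_int.const_mul _),
            intervalIntegral.integral_const_mul, intervalIntegral.integral_const, smul_eq_mul]
      _ ≤ (b - a) * (δ / m) ^ 2 + δ ^ 2 / ρ * (π / δ) := by
          gcongr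
          exact integral_abs_deriv_div_sq_add_sq_le hab hδ hφ' hφ''_cont hφ''_ne
      _ = (b - a) * (δ / m) ^ 2 + π * δ / ρ := by field_simp
  have := norm_integral_cexp_le_add_integral_div_sq_add_sq hab hδ hφ hφ' hφ''_cont hφ''_ne
  linarith

end SecondDerivative

lemma intervalIntegrable_cexp_of_continuousOn_Ioo (hab : a ≤ b)
    (hφ : ContinuousOn φ (Ioo a b)) :
    IntervalIntegrable (fun t => Complex.exp (φ t * Complex.I)) volume a b := by
  rw [intervalIntegrable_iff_integrableOn_Ioo_of_le hab]
  have hcont : ContinuousOn (fun t => Complex.exp (φ t * Complex.I)) (Ioo a b) := by fun_prop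
  exact IntegrableOn.of_bound measure_Ioo_lt_top (hcont.aestronglyMeasurable measurableSet_Ioo) 1
    (.of_forall fun t => (Complex.norm_exp_ofReal_mul_I _).le)

lemma norm_integral_le_of_forall_Ioo {E : Type*} [NormedAddCommGroup E] [NormedSpace ℝ E]
    {f : ℝ → E} {B : ℝ} (hab : a < b) (hf : IntervalIntegrable f volume a b)
    (hB : ∀ x y, a < x → x ≤ y → y < b → ‖∫ t in x..y, f t‖ ≤ B) :
    ‖∫ t in a..b, f t‖ ≤ B := by
  have hleft : Filter.Tendsto (fun ε => a + ε) (nhdsWithin 0 (Ioi 0)) (nhds a) :=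
    ((continuous_const.add continuous_id).tendsto' 0 a (add_zero a)).mono_left nhdsWithin_le_nhds
  have hright : Filter.Tendsto (fun ε => b - ε) (nhdsWithin 0 (Ioi 0)) (nhds b) :=
    ((continuous_const.sub continuous_id).tendsto' 0 b (sub_zero b)).mono_left nhdsWithin_le_nhds
  have hlim := (aecover_Ioc_of_Ioc hleft hright).integral_tendsto_of_countably_generated
    ((intervalIntegrable_iff_integrableOn_Ioc_of_le hab.le).1 hf)
  rw [intervalIntegral.integral_of_le hab.le]
  refine le_of_tendsto hlim.norm ?_
  filter_upwards [Ioo_mem_nhdsGT (half_pos (sub_pos.2 hab))] with ε hε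
  have hle : a + ε ≤ b - ε := by linarith [hε.2]
  rw [Measure.restrict_restrict_of_subset
    (Ioc_subset_Ioc (by linarith [hε.1]) (by linarith [hε.1])),
    ← intervalIntegral.integral_of_le hle]
  exact hB _ _ (by linarith [hε.1]) hle (by linarith [hε.1])

end OscillatoryIntegrals

/-- The phases to which the argument applies: `C²` functions on the open interval `(a, b)` whose
second derivative never vanishes, whose first derivative is bounded by `M`, and whose second
derivative dominates `κ` times the first. Nothing is required at the endpoints, so that `p''` may
vanish or blow up there, as for `t ^ α` at `0`. -/
structure IsCurvedOn (M κ : ℝ) (p : ℝ → ℝ) (a b : ℝ) : Prop where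
  contDiffOn : ContDiffOn ℝ 2 p (Ioo a b)
  deriv2_ne_zero : ∀ t ∈ Ioo a b, deriv (deriv p) t ≠ 0
  abs_deriv_le : ∀ t ∈ Ioo a b, |deriv p t| ≤ M
  mul_abs_deriv_le : ∀ t ∈ Ioo a b, κ * |deriv p t| ≤ |deriv (deriv p) t|

lemma AssumptionH.isCurvedOn {α c₁ c₂ c₃ T : ℝ} {p : ℝ → ℝ} (hp : AssumptionH α c₁ c₂ c₃ p)
    (hα : 1 ≤ α) (hc₂ : 0 < c₂) (hc₃ : 0 < c₃) :
    IsCurvedOn (c₂ * T ^ (α - 1)) (c₃ / (c₂ * T)) p 0 T := by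
  obtain ⟨-, hcontDiff, hderiv, hderiv2⟩ := hp
  refine ⟨hcontDiff.mono Ioo_subset_Ioi_self, fun t ht => ?_, fun t ht => ?_, fun t ht => ?_⟩
  · exact abs_pos.1 ((mul_pos hc₃ (Real.rpow_pos_of_pos ht.1 _)).trans_le (hderiv2 t ht.1))
  · refine (hderiv t ht.1.le).2.trans ?_
    gcongr
    exacts [ht.1.le, ht.2.le]
  · have ht0 : 0 < t := ht.1
    have hT : 0 < T := ht0.trans ht.2
    have hpow : t ^ (α - 1) = t ^ (α - 2) * t := by
      rw [← Real.rpow_add_one ht0.ne']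
      ring_nf
    calc c₃ / (c₂ * T) * |deriv p t| ≤ c₃ / (c₂ * T) * (c₂ * t ^ (α - 1)) := by
          gcongr
          exact (hderiv t ht0.le).2
      _ = c₃ * t ^ (α - 2) * (t / T) := by
          rw [hpow]
          field_simp
      _ ≤ c₃ * t ^ (α - 2) := mul_le_of_le_one_right (by positivity) ((div_le_one hT).2 ht.2.le)
      _ ≤ |deriv (deriv p) t| := hderiv2 t ht0

lemma half_abs_le_abs_add {x y : ℝ} (h : |x| ≤ |y| / 2) : |y| / 2 ≤ |x + y| := by
  have := abs_sub_abs_le_abs_add y x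
  rw [add_comm y] at this
  linarith

namespace IsCurvedOn

variable {M κ a b : ℝ} {p : ℝ → ℝ}

lemma hasDerivAt_phase (hp : IsCurvedOn M κ p a b) (D L : ℝ) {t : ℝ} (ht : t ∈ Ioo a b) :
    HasDerivAt (fun t => D * p t + L * t) (D * deriv p t + L) t := by
  have hdiff := (hp.contDiffOn.differentiableOn two_ne_zero).differentiableAt
    (isOpen_Ioo.mem_nhds ht)
  simpa using (hdiff.hasDerivAt.const_mul D).fun_add ((hasDerivAt_id t).const_mul L)

lemma contDiffOn_deriv (hp : IsCurvedOn M κ p a b) : ContDiffOn ℝ 1 (deriv p) (Ioo a b) :=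
  hp.contDiffOn.deriv_of_isOpen isOpen_Ioo (by norm_num)

lemma hasDerivAt_deriv_phase (hp : IsCurvedOn M κ p a b) (D L : ℝ) {t : ℝ} (ht : t ∈ Ioo a b) :
    HasDerivAt (fun t => D * deriv p t + L) (D * deriv (deriv p) t) t :=
  have hdiff := (hp.contDiffOn_deriv.differentiableOn one_ne_zero).differentiableAt
    (isOpen_Ioo.mem_nhds ht)
  (hdiff.hasDerivAt.const_mul D).add_const L

lemma continuousOn_deriv2_phase (hp : IsCurvedOn M κ p a b) (D : ℝ) :
    ContinuousOn (fun t => D * deriv (deriv p) t) (Ioo a b) :=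
  continuousOn_const.mul
    (hp.contDiffOn_deriv.continuousOn_deriv_of_isOpen isOpen_Ioo le_rfl)

lemma intervalIntegrable_cexp_phase (hp : IsCurvedOn M κ p a b) (hab : a ≤ b) (D L : ℝ) :
    IntervalIntegrable (fun t => Complex.exp ((D * p t + L * t : ℝ) * Complex.I)) volume a b :=
  intervalIntegrable_cexp_of_continuousOn_Ioo hab <|
    HasDerivAt.continuousOn fun _ ht => hp.hasDerivAt_phase D L ht

lemma norm_integral_cexp_phase_le_div {D L : ℝ} (hp : IsCurvedOn M κ p a b) (hab : a < b)
    (hD : D ≠ 0) (hL : L ≠ 0) (hDL : 2 * M * |D| ≤ |L|) :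
    ‖∫ t in a..b, Complex.exp ((D * p t + L * t : ℝ) * Complex.I)‖ ≤ 8 / |L| := by
  refine norm_integral_le_of_forall_Ioo hab (hp.intervalIntegrable_cexp_phase hab.le D L)
    fun x y hx hxy hy => ?_
  have hsub : Icc x y ⊆ Ioo a b := Icc_subset_Ioo hx hy
  have hlower : ∀ t ∈ Icc x y, |L| / 2 ≤ |D * deriv p t + L| := fun t ht => by
    refine half_abs_le_abs_add ?_
    rw [abs_mul]
    nlinarith [mul_le_mul_of_nonneg_left (hp.abs_deriv_le t (hsub ht)) (abs_nonneg D)]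
  calc ‖∫ t in x..y, Complex.exp ((D * p t + L * t : ℝ) * Complex.I)‖
      ≤ 4 / (|L| / 2) := norm_integral_cexp_le_of_le_abs_deriv hxy (by positivity)
        (fun t ht => hp.hasDerivAt_phase D L (hsub ht))
        (fun t ht => hp.hasDerivAt_deriv_phase D L (hsub ht))
        ((hp.continuousOn_deriv2_phase D).mono hsub)
        (fun t ht => mul_ne_zero hD (hp.deriv2_ne_zero t (hsub ht))) hlower
    _ = 8 / |L| := by
        field_simp
        norm_num

lemma half_abs_le_abs_deriv_phase_or {t D L : ℝ} (hp : IsCurvedOn M κ p a b) (hκ : 0 < κ)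
    (ht : t ∈ Ioo a b) :
    |L| / 2 ≤ |D * deriv p t + L| ∨ κ * |L| / 2 ≤ |D * deriv (deriv p) t| := by
  refine (le_or_gt |D * deriv p t| (|L| / 2)).imp half_abs_le_abs_add fun hlarge => ?_
  calc κ * |L| / 2 = κ * (|L| / 2) := by ring
    _ ≤ κ * |D * deriv p t| := by gcongr
    _ = |D| * (κ * |deriv p t|) := by
        rw [abs_mul]
        ring
    _ ≤ |D| * |deriv (deriv p) t| := by
        gcongr
        exact hp.mul_abs_deriv_le t ht
    _ = |D * deriv (deriv p) t| := (abs_mul _ _).symm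

lemma norm_integral_cexp_phase_le_div_sqrt {D L : ℝ} (hp : IsCurvedOn M κ p a b) (hab : a < b)
    (hκ : 0 < κ) (hD : D ≠ 0) (hL : 1 ≤ |L|) :
    ‖∫ t in a..b, Complex.exp ((D * p t + L * t : ℝ) * Complex.I)‖ ≤
      (2 + π + 4 * (b - a) + 2 * π / κ) / √|L| := by
  refine norm_integral_le_of_forall_Ioo hab (hp.intervalIntegrable_cexp_phase hab.le D L)
    fun x y hx hxy hy => ?_
  have hsub : Icc x y ⊆ Ioo a b := Icc_subset_Ioo hx hy
  have hδ : 0 < √|L| := by positivity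
  have hsq : √|L| ^ 2 = |L| := Real.sq_sqrt (abs_nonneg L)
  have hone : 1 ≤ √|L| := Real.one_le_sqrt.2 hL
  calc ‖∫ t in x..y, Complex.exp ((D * p t + L * t : ℝ) * Complex.I)‖
      ≤ (2 + π) / √|L| + (y - x) * (√|L| / (|L| / 2)) ^ 2 + π * √|L| / (κ * |L| / 2) :=
        norm_integral_cexp_le_of_le_abs_deriv_or_le_abs_deriv2 hxy hδ (by positivity)
          (by positivity) (fun t ht => hp.hasDerivAt_phase D L (hsub ht))
          (fun t ht => hp.hasDerivAt_deriv_phase D L (hsub ht))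
          ((hp.continuousOn_deriv2_phase D).mono hsub)
          (fun t ht => mul_ne_zero hD (hp.deriv2_ne_zero t (hsub ht)))
          fun t ht => hp.half_abs_le_abs_deriv_phase_or hκ (hsub ht)
    _ = (2 + π + 4 * (y - x) / √|L| + 2 * π / κ) / √|L| := by
        rw [← hsq, Real.sqrt_sq hδ.le]
        field_simp
        ring
    _ ≤ (2 + π + 4 * (b - a) + 2 * π / κ) / √|L| := by
        gcongr
        exact (div_le_self (by linarith) hone).trans (by linarith)

end IsCurvedOn

section PowerGaps

variable {s : ℝ}

lemma abs_sub_mul_max_rpow_le {x y : ℝ} (hs : 1 ≤ s) (hx : 0 ≤ x) (hy : 0 ≤ y) :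
    |x - y| * max x y ^ (s - 1) ≤ |x ^ s - y ^ s| := by
  wlog hyx : y ≤ x generalizing x y
  · rw [abs_sub_comm x, max_comm, abs_sub_comm (x ^ s)]
    exact this hy hx (le_of_not_ge hyx)
  have hpow : ∀ z : ℝ, 0 ≤ z → z ^ s = z ^ (s - 1) * z := fun z hz => by
    rw [← Real.rpow_add_one' hz (by linarith), sub_add_cancel]
  have hmono : y ^ (s - 1) * y ≤ x ^ (s - 1) * y := by
    gcongr
  rw [max_eq_left hyx, abs_of_nonneg (sub_nonneg.2 hyx)]
  refine le_trans ?_ (le_abs_self _)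
  rw [hpow x hx, hpow y hy]
  linarith

variable {j X L : ℝ}

lemma rpow_sub_half_le_of_mul_rpow_le (hs : 1 ≤ s) (hj : 1 ≤ j) (hjX : j ≤ X)
    (hL : j * X ^ (s - 1) ≤ L) :
    j ^ (s - 1 / 2) ≤ L :=
  calc j ^ (s - 1 / 2) ≤ j ^ (1 + (s - 1)) := by
        gcongr
        linarith
    _ = j * j ^ (s - 1) := Real.rpow_one_add' (by linarith) (by linarith)
    _ ≤ j * X ^ (s - 1) := by gcongr
    _ ≤ L := hL

/- Squared: `Q * L ≥ L ^ 2 / X ≥ j ^ 2 * X ^ (2 * s - 3) ≥ j ^ (2 * s - 1)`. -/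
lemma rpow_sub_half_le_sqrt_mul_sqrt {Q : ℝ} (hs : 3 / 2 ≤ s) (hj : 1 ≤ j) (hjX : j ≤ X)
    (hL : j * X ^ (s - 1) ≤ L) (hLQ : L ≤ Q * X) :
    j ^ (s - 1 / 2) ≤ √Q * √L := by
  have hj0 : 0 < j := by linarith
  have hX : 0 < X := by linarith
  have hL0 : 0 ≤ L := le_trans (by positivity) hL
  have hQ : 0 ≤ Q := nonneg_of_mul_nonneg_left (hL0.trans hLQ) hX
  have hsq : (j ^ (s - 1 / 2)) ^ 2 ≤ Q * L := by
    refine le_of_mul_le_mul_right ?_ hX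
    calc (j ^ (s - 1 / 2)) ^ 2 * X = j ^ 2 * j ^ (2 * s - 3) * X := by
          rw [← Real.rpow_mul_natCast hj0.le, ← Real.rpow_natCast j 2, ← Real.rpow_add hj0]
          push_cast
          ring_nf
      _ ≤ j ^ 2 * X ^ (2 * s - 3) * X := by
          gcongr
          linarith
      _ = (j * X ^ (s - 1)) * (j * X ^ (s - 1)) := by
          rw [mul_assoc, ← Real.rpow_add_one hX.ne', mul_mul_mul_comm, ← sq, ← Real.rpow_add hX]
          ring_nf
      _ ≤ L * (Q * X) := mul_le_mul hL (hL.trans hLQ) (by positivity) hL0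
      _ = Q * L * X := by ring
  rw [← Real.sqrt_mul hQ]
  exact Real.le_sqrt_of_sq_le hsq

end PowerGaps

lemma IsCurvedOn.norm_integral_cexp_phase_le_rpow {M κ a b s A j X D L : ℝ} {p : ℝ → ℝ}
    (hp : IsCurvedOn M κ p a b) (hab : a < b) (hκ : 0 < κ) (hs : 3 / 2 ≤ s)
    (hD : D ≠ 0) (hj : 1 ≤ j) (hjX : j ≤ X) (hL : j * X ^ (s - 1) ≤ |L|) (hDA : |D| ≤ A * X) :
    ‖∫ t in a..b, Complex.exp ((D * p t + L * t : ℝ) * Complex.I)‖ ≤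
      (8 + (2 + π + 4 * (b - a) + 2 * π / κ) * √(2 * M * A)) * j ^ (-(s - 1 / 2)) := by
  set C := 2 + π + 4 * (b - a) + 2 * π / κ
  have hC : 0 ≤ C := by
    have := sub_pos.2 hab
    positivity
  have hj0 : 0 < j := by linarith
  have hL1 : j ^ (s - 1 / 2) ≤ |L| := rpow_sub_half_le_of_mul_rpow_le (by linarith) hj hjX hL
  have hLone : 1 ≤ |L| := (Real.one_le_rpow hj (by linarith)).trans hL1
  have hM : 0 ≤ M :=
    (abs_nonneg _).trans (hp.abs_deriv_le _ ⟨left_lt_add_div_two.2 hab, add_div_two_lt_right.2 hab⟩)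
  have hjs : 0 < j ^ (s - 1 / 2) := Real.rpow_pos_of_pos hj0 _
  rw [Real.rpow_neg hj0.le, ← div_eq_mul_inv, add_div]
  rcases le_or_gt (2 * M * |D|) |L| with hfar | hnear
  · calc _ ≤ 8 / |L| :=
          hp.norm_integral_cexp_phase_le_div hab hD (abs_pos.1 (by linarith)) hfar
      _ ≤ 8 / j ^ (s - 1 / 2) := by gcongr
      _ ≤ _ := le_add_of_nonneg_right (div_nonneg (mul_nonneg hC (Real.sqrt_nonneg _)) hjs.le)
  · have hLQ : |L| ≤ 2 * M * A * X :=
      calc |L| ≤ 2 * M * |D| := hnear.le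
        _ ≤ 2 * M * (A * X) := by gcongr
        _ = 2 * M * A * X := by ring
    have hsqrt := rpow_sub_half_le_sqrt_mul_sqrt hs hj hjX hL hLQ
    calc _ ≤ C / √|L| := hp.norm_integral_cexp_phase_le_div_sqrt hab hκ hD hLone
      _ ≤ C * √(2 * M * A) / j ^ (s - 1 / 2) := by
          rw [div_le_div_iff₀ (by positivity) hjs, mul_assoc]
          gcongr
      _ ≤ _ := le_add_of_nonneg_left (by positivity)

section AlmostOrthogonality

lemma schur_test {ι : Type*} (S : Finset ι) (x : ι → ℝ) {w : ι → ι → ℝ} {B : ℝ}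
    (hw : ∀ n m, 0 ≤ w n m) (hsymm : ∀ n m, w n m = w m n)
    (hB : ∀ n ∈ S, ∑ m ∈ S, w n m ≤ B) :
    ∑ n ∈ S, ∑ m ∈ S, x n * x m * w n m ≤ B * ∑ n ∈ S, x n ^ 2 := by
  have hswap : ∑ n ∈ S, ∑ m ∈ S, x m ^ 2 * w n m = ∑ n ∈ S, ∑ m ∈ S, x n ^ 2 * w n m := by
    rw [Finset.sum_comm]
    simp only [hsymm]
  calc ∑ n ∈ S, ∑ m ∈ S, x n * x m * w n m
      ≤ ∑ n ∈ S, ∑ m ∈ S, (x n ^ 2 * w n m + x m ^ 2 * w n m) / 2 := by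
        gcongr with n _ m _
        nlinarith [mul_nonneg (sq_nonneg (x n - x m)) (hw n m)]
    _ = ∑ n ∈ S, x n ^ 2 * ∑ m ∈ S, w n m := by
        simp only [← Finset.sum_div, Finset.sum_add_distrib, hswap, Finset.mul_sum]
        exact add_self_div_two _
    _ ≤ ∑ n ∈ S, x n ^ 2 * B := by
        gcongr with n hn
        exact hB n hn
    _ = B * ∑ n ∈ S, x n ^ 2 := by rw [← Finset.sum_mul, mul_comm]

variable {Ω ι : Type*} [MeasurableSpace Ω] {μ : Measure Ω} {e : ι → Ω → ℂ}

lemma integral_norm_sum_sq (S : Finset ι) (c : ι → ℂ)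
    (hint : ∀ n m, Integrable (fun t => e n t * conj (e m t)) μ) :
    ((∫ t, ‖∑ n ∈ S, c n * e n t‖ ^ 2 ∂μ : ℝ) : ℂ) =
      ∑ n ∈ S, ∑ m ∈ S, c n * conj (c m) * ∫ t, e n t * conj (e m t) ∂μ := by
  have hexpand : ∀ t, ((‖∑ n ∈ S, c n * e n t‖ ^ 2 : ℝ) : ℂ) =
      ∑ n ∈ S, ∑ m ∈ S, c n * conj (c m) * (e n t * conj (e m t)) := fun t => by
    rw [Complex.ofReal_pow, ← Complex.mul_conj', map_sum, Finset.sum_mul_sum]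
    simp only [map_mul, mul_mul_mul_comm]
  have hint_mul : ∀ n m, Integrable (fun t => c n * conj (c m) * (e n t * conj (e m t))) μ :=
    fun n m => (hint n m).const_mul _
  rw [← integral_complex_ofReal]
  simp only [hexpand]
  rw [integral_finsetSum _ fun n _ => integrable_finsetSum _ fun m _ => hint_mul n m]
  refine Finset.sum_congr rfl fun n _ => ?_
  rw [integral_finsetSum _ fun m _ => hint_mul n m]
  simp only [integral_const_mul]

lemma integral_norm_sum_sq_le {w : ι → ι → ℝ} {B : ℝ} (S : Finset ι) (c : ι → ℂ)
    (hint : ∀ n m, Integrable (fun t => e n t * conj (e m t)) μ)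
    (hw : ∀ n m, ‖∫ t, e n t * conj (e m t) ∂μ‖ ≤ w n m) (hsymm : ∀ n m, w n m = w m n)
    (hB : ∀ n ∈ S, ∑ m ∈ S, w n m ≤ B) :
    ∫ t, ‖∑ n ∈ S, c n * e n t‖ ^ 2 ∂μ ≤ B * ∑ n ∈ S, ‖c n‖ ^ 2 :=
  calc ∫ t, ‖∑ n ∈ S, c n * e n t‖ ^ 2 ∂μ
      ≤ ‖((∫ t, ‖∑ n ∈ S, c n * e n t‖ ^ 2 ∂μ : ℝ) : ℂ)‖ := by
        rw [Complex.norm_real]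
        exact Real.le_norm_self _
    _ ≤ ∑ n ∈ S, ∑ m ∈ S, ‖c n * conj (c m) * ∫ t, e n t * conj (e m t) ∂μ‖ := by
        rw [integral_norm_sum_sq S c hint]
        exact norm_sum_le_of_le _ fun n _ => norm_sum_le _ _
    _ ≤ ∑ n ∈ S, ∑ m ∈ S, ‖c n‖ * ‖c m‖ * w n m := by
        gcongr with n _ m _
        rw [norm_mul, norm_mul, RCLike.norm_conj]
        gcongr
        exact hw n m
    _ ≤ B * ∑ n ∈ S, ‖c n‖ ^ 2 :=
        schur_test S (fun n => ‖c n‖) (fun n m => (norm_nonneg _).trans (hw n m)) hsymm hB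

end AlmostOrthogonality

lemma sum_abs_sub_abs_le_two_mul_tsum {w : ℤ → ℝ} (hw : Summable w) (hw_nonneg : ∀ k, 0 ≤ w k)
    (n : ℤ) (S : Finset ℤ) : ∑ m ∈ S, w (|n| - |m|) ≤ 2 * ∑' k, w k := by
  have hsub : ∑ m ∈ S, w (|n| - m) ≤ ∑' k, w k := by
    rw [← (Equiv.subLeft |n|).tsum_eq w]
    exact (hw.comp_injective (Equiv.subLeft |n|).injective).sum_le_tsum S fun m _ => hw_nonneg _
  have hadd : ∑ m ∈ S, w (|n| + m) ≤ ∑' k, w k := by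
    rw [← (Equiv.addLeft |n|).tsum_eq w]
    exact (hw.comp_injective (Equiv.addLeft |n|).injective).sum_le_tsum S fun m _ => hw_nonneg _
  calc ∑ m ∈ S, w (|n| - |m|) ≤ ∑ m ∈ S, (w (|n| - m) + w (|n| + m)) := by
        gcongr with m _
        rcases abs_choice m with h | h <;> rw [h]
        · exact le_add_of_nonneg_right (hw_nonneg _)
        · rw [sub_neg_eq_add]
          exact le_add_of_nonneg_left (hw_nonneg _)
    _ ≤ 2 * ∑' k, w k := by
        rw [Finset.sum_add_distrib, two_mul]
        exact add_le_add hsub hadd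

/-- The weight `|k| ^ (-r)` on the integers, given the value `1` at `k = 0` by means of the maximum.
It measures the decay of the Gram matrix of the modes away from `|n| = |m|`. -/
noncomputable def intDecay (r : ℝ) (k : ℤ) : ℝ := max 1 |(k : ℝ)| ^ (-r)

section IntDecay

variable (r : ℝ)

lemma intDecay_pos (k : ℤ) : 0 < intDecay r k :=
  Real.rpow_pos_of_pos (zero_lt_one.trans_le (le_max_left _ _)) _

lemma intDecay_zero : intDecay r 0 = 1 := by simp [intDecay]

lemma intDecay_sub_comm (n m : ℤ) : intDecay r (n - m) = intDecay r (m - n) := by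
  simp only [intDecay, Int.cast_sub, abs_sub_comm]

variable {r}

lemma one_le_abs_intCast {k : ℤ} (hk : k ≠ 0) : 1 ≤ |(k : ℝ)| := by
  exact_mod_cast Int.one_le_abs hk

lemma intDecay_of_ne_zero {k : ℤ} (hk : k ≠ 0) : intDecay r k = |(k : ℝ)| ^ (-r) := by
  rw [intDecay, max_eq_right (one_le_abs_intCast hk)]

lemma summable_intDecay (hr : 1 < r) : Summable (intDecay r) := by
  refine (Real.summable_abs_int_rpow hr).congr_cofinite ?_
  filter_upwards [(finite_singleton (0 : ℤ)).compl_mem_cofinite] with k hk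
  exact (intDecay_of_ne_zero hk).symm

end IntDecay

/-- The mode `t ↦ e^{2πi (n p(t) + |n|^s t)}` of frequency `n` along the curve with phase `p`. -/
noncomputable def curvedMode (s : ℝ) (p : ℝ → ℝ) (n : ℤ) (t : ℝ) : ℂ :=
  Complex.exp (2 * Real.pi * Complex.I *
    ((n : ℂ) * (p t : ℂ) + ((|(n : ℝ)| ^ s : ℝ) : ℂ) * (t : ℂ)))

lemma curvedMode_mul_conj (s : ℝ) (p : ℝ → ℝ) (n m : ℤ) (t : ℝ) :
    curvedMode s p n t * conj (curvedMode s p m t) =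
      Complex.exp ((2 * π * (n - m) * p t + 2 * π * (|(n : ℝ)| ^ s - |(m : ℝ)| ^ s) * t : ℝ) *
        Complex.I) := by
  rw [curvedMode, curvedMode, ← Complex.exp_conj, ← Complex.exp_add]
  simp only [map_mul, map_add, Complex.conj_ofReal, Complex.conj_I, map_ofNat, map_intCast]
  push_cast
  ring_nf

lemma norm_integral_curvedMode_mul_conj_le {a b : ℝ} (hab : a ≤ b) (s : ℝ) (p : ℝ → ℝ)
    (n m : ℤ) :
    ‖∫ t in a..b, curvedMode s p n t * conj (curvedMode s p m t)‖ ≤ b - a := by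
  simp only [curvedMode_mul_conj]
  simpa [abs_of_nonneg (sub_nonneg.2 hab)] using
    intervalIntegral.norm_integral_le_of_norm_le_const (a := a) (b := b)
      fun t _ => (Complex.norm_exp_ofReal_mul_I (2 * π * (n - m) * p t +
        2 * π * (|(n : ℝ)| ^ s - |(m : ℝ)| ^ s) * t)).le

namespace IsCurvedOn

variable {M κ a b s : ℝ} {p : ℝ → ℝ}

lemma intervalIntegrable_curvedMode_mul_conj (hp : IsCurvedOn M κ p a b) (hab : a ≤ b) (s : ℝ)
    (n m : ℤ) :
    IntervalIntegrable (fun t => curvedMode s p n t * conj (curvedMode s p m t)) volume a b := by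
  simp only [curvedMode_mul_conj]
  exact hp.intervalIntegrable_cexp_phase hab _ _

lemma norm_integral_curvedMode_mul_conj_le_of_abs_ne {n m : ℤ} (hp : IsCurvedOn M κ p a b)
    (hab : a < b) (hκ : 0 < κ) (hs : 3 / 2 ≤ s) (hnm : |n| ≠ |m|) :
    ‖∫ t in a..b, curvedMode s p n t * conj (curvedMode s p m t)‖ ≤
      (8 + (2 + π + 4 * (b - a) + 2 * π / κ) * √(2 * M * (4 * π))) *
        intDecay (s - 1 / 2) (|n| - |m|) := by
  have hk : |n| - |m| ≠ 0 := sub_ne_zero.2 hnm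
  have hj : ((|n| - |m| : ℤ) : ℝ) = |(n : ℝ)| - |(m : ℝ)| := by push_cast; rfl
  have hD : 2 * π * ((n : ℝ) - m) ≠ 0 :=
    mul_ne_zero (by positivity) (sub_ne_zero.2 fun h => hnm (by rw [Int.cast_injective h]))
  have hjX : |(|(n : ℝ)| - |(m : ℝ)|)| ≤ max |(n : ℝ)| |(m : ℝ)| :=
    abs_sub_le_of_nonneg_of_le (abs_nonneg _) (le_max_left _ _) (abs_nonneg _) (le_max_right _ _)
  have hL : |(|(n : ℝ)| - |(m : ℝ)|)| * max |(n : ℝ)| |(m : ℝ)| ^ (s - 1) ≤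
      |2 * π * (|(n : ℝ)| ^ s - |(m : ℝ)| ^ s)| := by
    rw [abs_mul, abs_of_pos Real.two_pi_pos]
    exact (abs_sub_mul_max_rpow_le (by linarith) (abs_nonneg _) (abs_nonneg _)).trans
      (le_mul_of_one_le_left (abs_nonneg _) (by linarith [Real.pi_gt_three]))
  have hDX : |2 * π * ((n : ℝ) - m)| ≤ 4 * π * max |(n : ℝ)| |(m : ℝ)| := by
    have hsub : |(n : ℝ) - m| ≤ 2 * max |(n : ℝ)| |(m : ℝ)| := by
      linarith [abs_sub (n : ℝ) m, le_max_left |(n : ℝ)| |(m : ℝ)|,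
        le_max_right |(n : ℝ)| |(m : ℝ)|]
    rw [abs_mul, abs_of_pos Real.two_pi_pos]
    nlinarith [mul_le_mul_of_nonneg_left hsub Real.two_pi_pos.le]
  simp only [curvedMode_mul_conj]
  rw [intDecay_of_ne_zero hk, hj]
  exact hp.norm_integral_cexp_phase_le_rpow hab hκ hs hD (hj ▸ one_le_abs_intCast hk) hjX hL hDX

lemma exists_norm_integral_curvedMode_mul_conj_le (hp : IsCurvedOn M κ p a b) (hab : a < b)
    (hκ : 0 < κ) (hs : 3 / 2 ≤ s) :
    ∃ C : ℝ, 0 < C ∧ ∀ n m : ℤ,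
      ‖∫ t in a..b, curvedMode s p n t * conj (curvedMode s p m t)‖ ≤
        C * intDecay (s - 1 / 2) (|n| - |m|) := by
  refine ⟨max (b - a) (8 + (2 + π + 4 * (b - a) + 2 * π / κ) * √(2 * M * (4 * π))),
    lt_max_of_lt_left (sub_pos.2 hab), fun n m => ?_⟩
  rcases eq_or_ne |n| |m| with hnm | hnm
  · rw [hnm, sub_self, intDecay_zero, mul_one]
    exact (norm_integral_curvedMode_mul_conj_le hab.le s p n m).trans (le_max_left _ _)
  · refine (hp.norm_integral_curvedMode_mul_conj_le_of_abs_ne hab hκ hs hnm).trans ?_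
    exact mul_le_mul_of_nonneg_right (le_max_right _ _) (intDecay_pos _ _).le

end IsCurvedOn

theorem curved_ingham_upper_general {s M κ a b : ℝ} {p : ℝ → ℝ} (hs : 3 / 2 < s) (hab : a < b)
    (hκ : 0 < κ) (hp : IsCurvedOn M κ p a b) :
    ∃ C : ℝ, 0 < C ∧ ∀ c : ℤ → ℂ, {n : ℤ | c n ≠ 0}.Finite →
      ∫ t in a..b, ‖∑' n : ℤ, c n * curvedMode s p n t‖ ^ 2 ≤ C * ∑' n : ℤ, ‖c n‖ ^ 2 := by
  obtain ⟨C, hC, hgram⟩ := hp.exists_norm_integral_curvedMode_mul_conj_le hab hκ hs.le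
  have hsum : Summable (intDecay (s - 1 / 2)) := summable_intDecay (by linarith)
  have hpos : ∀ k, 0 < intDecay (s - 1 / 2) k := intDecay_pos _
  refine ⟨C * (2 * ∑' k, intDecay (s - 1 / 2) k),
    mul_pos hC (mul_pos two_pos (hsum.tsum_pos (fun k => (hpos k).le) 0 (hpos 0))),
    fun c hc => ?_⟩
  have hc_zero : ∀ n ∉ hc.toFinset, c n = 0 := fun n hn => by simpa using hn
  have hmodes : ∀ t, ∑' n, c n * curvedMode s p n t = ∑ n ∈ hc.toFinset, c n * curvedMode s p n t :=
    fun t => tsum_eq_sum fun n hn => by rw [hc_zero n hn, zero_mul]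
  have hcoeffs : ∑' n, ‖c n‖ ^ 2 = ∑ n ∈ hc.toFinset, ‖c n‖ ^ 2 :=
    tsum_eq_sum fun n hn => by rw [hc_zero n hn, norm_zero, zero_pow two_ne_zero]
  simp only [hmodes, hcoeffs, intervalIntegral.integral_of_le hab.le] at hgram ⊢
  refine integral_norm_sum_sq_le hc.toFinset c
    (fun n m => (hp.intervalIntegrable_curvedMode_mul_conj hab.le s n m).1) hgram
    (fun n m => by rw [intDecay_sub_comm]) fun n _ => ?_
  rw [← Finset.mul_sum]
  gcongr
  exact sum_abs_sub_abs_le_two_mul_tsum hsum (fun k => (hpos k).le) n hc.toFinset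

/-- **Curved Ingham inequality, upper bound.** -/
theorem curved_ingham_upper
    (α s c₁ c₂ c₃ : ℝ) (hα : 1 < α) (hs : 3 / 2 < s)
    (hc₁ : 0 < c₁) (hc₁₂ : c₁ < c₂) (hc₃ : 0 < c₃)
    (p : ℝ → ℝ) (hp : AssumptionH α c₁ c₂ c₃ p) :
    ∀ T : ℝ, 0 < T → ∃ C : ℝ, 0 < C ∧
      ∀ c : ℤ → ℂ, {n : ℤ | c n ≠ 0}.Finite →
        (∫ t in (0:ℝ)..T,
          ‖∑' n : ℤ, c n * Complex.exp (2 * Real.pi * Complex.I *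
            ((n : ℂ) * (p t : ℂ) + ((|(n : ℝ)| ^ s : ℝ) : ℂ) * (t : ℂ)))‖ ^ 2)
        ≤ C * ∑' n : ℤ, ‖c n‖ ^ 2 := by
  intro T hT
  have hc₂ : 0 < c₂ := hc₁.trans hc₁₂
  exact curved_ingham_upper_general hs hT (div_pos hc₃ (mul_pos hc₂ hT))
    (hp.isCurvedOn hα.le hc₂ hc₃)
end

section
/- Let γ > 0 and s > 1. Then the supremum M(γ,s) := sup { |n − m| / ||n|^s − |m|^s|^γ : m, n ∈ ℤ, |m| ≠ |n| } is finite if and only if (s − 1)γ ≥ 1, and in that case M(γ,s) ≤ 4. -/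
/-!
For `0 < s` and `0 ≤ x ≤ y`, the gap `y ^ s - x ^ s` is comparable to `(y - x) * y ^ (s - 1)`.
If `1 ≤ (s - 1) * γ`, then `1 < s`, so for integers `|m| < |n|` the gap of the `s`-th powers is at
least `|n| ^ (s - 1)` and its `γ`-th power at least `|n|`, while `|n - m| ≤ 2 * |n|`. Conversely,
the nearly antipodal pairs `(1 - k, k)` have distance about `2 * k` and a gap of order
`k ^ (s - 1)`, so along them the quotient grows at least like `k ^ (1 - (s - 1) * γ)`.
-/

open Filter

theorem sub_mul_rpow_sub_one_le_rpow_sub_rpow {s x y : ℝ} (hs : 1 ≤ s) (hx : 0 ≤ x) (hxy : x ≤ y) :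
    (y - x) * y ^ (s - 1) ≤ y ^ s - x ^ s := by
  have rpow_eq {z : ℝ} (hz : 0 ≤ z) : z ^ s = z ^ (s - 1) * z := by
    rw [← Real.rpow_add_one' hz (by linarith), sub_add_cancel]
  have hpow : x * x ^ (s - 1) ≤ x * y ^ (s - 1) := by gcongr
  rw [rpow_eq hx, rpow_eq (hx.trans hxy)]
  linarith

theorem one_sub_max_mul_le_one_sub_rpow {s t : ℝ} (ht₀ : 0 ≤ t) (ht₁ : t ≤ 1) :
    1 - max 1 s * t ≤ (1 - t) ^ s := by
  rcases le_total s 1 with hs₁ | hs₁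
  · rw [max_eq_left hs₁, one_mul]
    exact Real.self_le_rpow_of_le_one (by linarith) (by linarith) hs₁
  · rw [max_eq_right hs₁]
    have bernoulli := one_add_mul_self_le_rpow_one_add (s := -t) (by linarith) hs₁
    simpa only [mul_neg, ← sub_eq_add_neg] using bernoulli

theorem rpow_sub_rpow_le_max_mul_sub_mul_rpow_sub_one {s x y : ℝ} (hx : 0 ≤ x) (hxy : x ≤ y)
    (hy : 0 < y) :
    y ^ s - x ^ s ≤ max 1 s * (y - x) * y ^ (s - 1) := by
  have hratio : 1 - max 1 s * (1 - x / y) ≤ (x / y) ^ s := by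
    simpa only [sub_sub_cancel] using one_sub_max_mul_le_one_sub_rpow (s := s)
      (sub_nonneg.2 ((div_le_one hy).2 hxy)) (sub_le_self 1 (div_nonneg hx hy.le))
  rw [Real.div_rpow hx hy.le, le_div_iff₀ (Real.rpow_pos_of_pos hy s)] at hratio
  calc y ^ s - x ^ s ≤ max 1 s * (1 - x / y) * y ^ s := by linarith
    _ = max 1 s * (y - x) * y ^ (s - 1) := by
      rw [Real.rpow_sub_one hy.ne']
      field_simp

/-- The quotient whose supremum over integers with `|x| ≠ |y|` is `M(γ, s)`, extended to real
arguments. For `0 < s` the denominator vanishes only if `|x| = |y|`. -/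
noncomputable def rpowGapQuotient (γ s x y : ℝ) : ℝ :=
  |y - x| / abs (|y| ^ s - |x| ^ s) ^ γ

section rpowGapQuotient

variable {γ s x y : ℝ}

theorem rpowGapQuotient_comm (γ s x y : ℝ) : rpowGapQuotient γ s x y = rpowGapQuotient γ s y x := by
  rw [rpowGapQuotient, abs_sub_comm, abs_sub_comm (|y| ^ s), rpowGapQuotient]

theorem abs_le_abs_rpow_sub_rpow_rpow (hγ : 0 ≤ γ) (h : 1 ≤ (s - 1) * γ) (hxy : |x| + 1 ≤ |y|) :
    |y| ≤ abs (|y| ^ s - |x| ^ s) ^ γ := by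
  have hs : 0 < s - 1 := pos_of_mul_pos_left (one_pos.trans_le h) hγ
  have hy : 1 ≤ |y| := by linarith [abs_nonneg x]
  have hgap : |y| ^ (s - 1) ≤ |y| ^ s - |x| ^ s :=
    calc |y| ^ (s - 1) ≤ (|y| - |x|) * |y| ^ (s - 1) :=
          le_mul_of_one_le_left (by positivity) (by linarith)
      _ ≤ |y| ^ s - |x| ^ s :=
          sub_mul_rpow_sub_one_le_rpow_sub_rpow (by linarith) (abs_nonneg x) (by linarith)
  calc |y| ≤ |y| ^ ((s - 1) * γ) := Real.self_le_rpow_of_one_le hy h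
    _ = (|y| ^ (s - 1)) ^ γ := Real.rpow_mul (abs_nonneg y) _ _
    _ ≤ abs (|y| ^ s - |x| ^ s) ^ γ := by
      gcongr
      exact hgap.trans (le_abs_self _)

theorem rpowGapQuotient_le_two (hγ : 0 ≤ γ) (h : 1 ≤ (s - 1) * γ) (hxy : 1 ≤ abs (|y| - |x|)) :
    rpowGapQuotient γ s x y ≤ 2 := by
  wlog hle : |x| ≤ |y| generalizing x y
  · rw [rpowGapQuotient_comm]
    exact this (by rwa [abs_sub_comm]) (le_of_not_ge hle)
  rw [abs_of_nonneg (sub_nonneg.2 hle)] at hxy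
  refine div_le_of_le_mul₀ (by positivity) zero_le_two ?_
  calc |y - x| ≤ |y| + |x| := abs_sub y x
    _ ≤ 2 * |y| := by linarith
    _ ≤ 2 * abs (|y| ^ s - |x| ^ s) ^ γ := by
      gcongr
      exact abs_le_abs_rpow_sub_rpow_rpow hγ h (by linarith)

theorem rpow_div_le_rpowGapQuotient_one_sub_self (hγ : 0 ≤ γ) (hs : 0 < s) (hx : 1 ≤ x) :
    x ^ (1 - (s - 1) * γ) / max 1 s ^ γ ≤ rpowGapQuotient γ s (1 - x) x := by
  have hx₀ : 0 < x := by linarith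
  have hgap_pos : 0 < x ^ s - (x - 1) ^ s :=
    sub_pos.2 (Real.rpow_lt_rpow (by linarith) (by linarith) hs)
  have hgap_le : x ^ s - (x - 1) ^ s ≤ max 1 s * x ^ (s - 1) := by
    simpa only [sub_sub_cancel, mul_one] using
      rpow_sub_rpow_le_max_mul_sub_mul_rpow_sub_one (s := s) (sub_nonneg.2 hx) (by linarith) hx₀
  have hdist : x ≤ |x - (1 - x)| := le_abs.2 (.inl (by linarith))
  calc x ^ (1 - (s - 1) * γ) / max 1 s ^ γ = x / (max 1 s * x ^ (s - 1)) ^ γ := by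
        rw [Real.rpow_sub hx₀, Real.rpow_one, Real.rpow_mul hx₀.le,
          Real.mul_rpow (by positivity) (by positivity), div_div, mul_comm]
    _ ≤ |x - (1 - x)| / (x ^ s - (x - 1) ^ s) ^ γ := by gcongr
    _ = rpowGapQuotient γ s (1 - x) x := by
        rw [rpowGapQuotient, abs_of_pos hx₀, abs_sub_comm 1 x, abs_of_nonneg (sub_nonneg.2 hx),
          abs_of_pos hgap_pos]

theorem tendsto_rpowGapQuotient_one_sub_self_atTop (hγ : 0 ≤ γ) (hs : 0 < s)
    (h : (s - 1) * γ < 1) :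
    Tendsto (fun x : ℝ ↦ rpowGapQuotient γ s (1 - x) x) atTop atTop := by
  refine tendsto_atTop_mono' atTop ?_
    ((tendsto_rpow_atTop (sub_pos.2 h)).atTop_div_const (r := max 1 s ^ γ) (by positivity))
  filter_upwards [eventually_ge_atTop 1] with x hx
  exact rpow_div_le_rpowGapQuotient_one_sub_self hγ hs hx

theorem not_bddAbove_rpowGapQuotient_int (hγ : 0 ≤ γ) (hs : 0 < s) (h : (s - 1) * γ < 1) :
    ¬ BddAbove {q : ℝ | ∃ m n : ℤ, |m| ≠ |n| ∧ q = rpowGapQuotient γ s m n} := by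
  rintro ⟨B, hB⟩
  obtain ⟨n, hn⟩ := (((tendsto_rpowGapQuotient_one_sub_self_atTop hγ hs h).comp
    tendsto_intCast_atTop_atTop).eventually_gt_atTop B).exists
  refine hn.not_ge (hB ⟨1 - n, n, ?_, by simp⟩)
  rw [Ne, abs_eq_abs]
  lia

end rpowGapQuotient

theorem bounded_quotient_general {γ s : ℝ} (hγ : 0 ≤ γ) (hs : 0 < s) :
    (BddAbove {q : ℝ | ∃ m n : ℤ, |m| ≠ |n| ∧ q = rpowGapQuotient γ s m n} ↔ 1 ≤ (s - 1) * γ) ∧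
    (1 ≤ (s - 1) * γ → ∀ m n : ℤ, |m| ≠ |n| → rpowGapQuotient γ s m n ≤ 2) := by
  have hbound (h : 1 ≤ (s - 1) * γ) (m n : ℤ) (hmn : |m| ≠ |n|) : rpowGapQuotient γ s m n ≤ 2 :=
    rpowGapQuotient_le_two hγ h (by exact_mod_cast Int.one_le_abs (sub_ne_zero.2 hmn.symm))
  refine ⟨⟨fun hbdd ↦ ?_, fun h ↦ ⟨2, ?_⟩⟩, hbound⟩
  · by_contra! h
    exact not_bddAbove_rpowGapQuotient_int hγ hs h hbdd
  · rintro _ ⟨m, n, hmn, rfl⟩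
    exact hbound h m n hmn

/-- **Lemma `lem:bounded`.** For `γ > 0` and `s > 1`, the supremum
`M(γ,s) = sup { |n-m| / ||n|^s - |m|^s|^γ : m,n ∈ ℤ, |m| ≠ |n| }` is finite
if and only if `(s-1)γ ≥ 1`, and in that case `M(γ,s) ≤ 4`. -/
theorem bounded_quotient (γ s : ℝ) (hγ : 0 < γ) (hs : 1 < s) :
    (BddAbove {x : ℝ | ∃ m n : ℤ, |m| ≠ |n| ∧
        x = |(n : ℝ) - (m : ℝ)| / abs (|(n : ℝ)| ^ s - |(m : ℝ)| ^ s) ^ γ}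
      ↔ 1 ≤ (s - 1) * γ) ∧
    (1 ≤ (s - 1) * γ → ∀ m n : ℤ, |m| ≠ |n| →
      |(n : ℝ) - (m : ℝ)| / abs (|(n : ℝ)| ^ s - |(m : ℝ)| ^ s) ^ γ ≤ 4) := by
  obtain ⟨hbdd, hbound⟩ := bounded_quotient_general hγ.le (one_pos.trans hs)
  exact ⟨hbdd, fun h m n hmn ↦ (hbound h m n hmn).trans (by norm_num)⟩
end

section
/- Let s > 1, δ > 0 and γ ∈ ℝ satisfy sδ + γ > 1 if γ ≥ 0, and sδ + γ > max(1, δ) if γ < 0. For integers m, n with |m| ≠ |n| set a_{n,m} := 1/( |n − m|^γ · ||n|^s − |m|^s|^δ ). Then for every m ∈ ℤ the series S_m := ∑_{n ∈ ℤ, |n| ≠ |m|} a_{n,m} converges, and S_m → 0 as |m| → ∞. -/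
/-- The coefficient `a_{n,m} = 1/(|n−m|^γ ||n|^s − |m|^s|^δ)`. -/
noncomputable def aCoef (s δ γ : ℝ) (n m : ℤ) : ℝ :=
  1 / (|(n : ℝ) - (m : ℝ)| ^ γ * abs (|(n : ℝ)| ^ s - |(m : ℝ)| ^ s) ^ δ)

/-!
Put `X = max |n| |m|` and `d = ||n| - |m||`, so that `d ≤ |n - m| ≤ 2 X` and `X ^ (s - 1) * d` is a
lower bound for `||n| ^ s - |m| ^ s|`. Bounding `|n - m| ^ (-γ)` through `d` if `γ ≥ 0` and
through `X` if `γ < 0` gives `a_{n,m} ≤ 2 ^ γ⁻ * X ^ (-p) * d ^ (-q)` with `p = (s - 1) δ - γ⁻ > 0`,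
`q = δ + γ⁺` and `p + q = s δ + γ > 1`. Since `X ≥ |m|` and `X ≥ d`, a small part `X ^ (-θ)`
of the first factor can be spent on decay in `m` and the rest on raising the exponent of `d` to
`p + q - θ > 1`, and `∑ d ^ (-(p + q - θ))` is bounded uniformly in `m`.
-/

open Filter Topology

section RealEstimates

variable {s x y : ℝ}

theorem rpow_sub_one_mul_sub_le (hs : 1 ≤ s) (hy : 0 ≤ y) (hyx : y ≤ x) :
    x ^ (s - 1) * (x - y) ≤ x ^ s - y ^ s := by
  have rpow_eq {z : ℝ} (hz : 0 ≤ z) : z ^ s = z ^ (s - 1) * z := by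
    rw [← Real.rpow_add_one' hz (by linarith), sub_add_cancel]
  have rpow_le : y ^ (s - 1) ≤ x ^ (s - 1) := Real.rpow_le_rpow hy hyx (by linarith)
  rw [rpow_eq hy, rpow_eq (hy.trans hyx), mul_sub]
  gcongr

theorem max_rpow_sub_one_mul_abs_sub_le (hs : 1 ≤ s) (hx : 0 ≤ x) (hy : 0 ≤ y) :
    max x y ^ (s - 1) * |x - y| ≤ |x ^ s - y ^ s| := by
  wlog hyx : y ≤ x generalizing x y
  · rw [max_comm, abs_sub_comm, abs_sub_comm (x ^ s)]
    exact this hy hx (le_of_not_ge hyx)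
  rw [max_eq_left hyx, abs_of_nonneg (sub_nonneg.2 hyx)]
  exact (rpow_sub_one_mul_sub_le hs hy hyx).trans (le_abs_self _)

theorem abs_rpow_sub_rpow_rpow_neg_le {δ : ℝ} (hs : 1 ≤ s) (hδ : 0 ≤ δ) (hx : 0 ≤ x) (hy : 0 ≤ y)
    (hxy : x ≠ y) :
    |x ^ s - y ^ s| ^ (-δ) ≤ max x y ^ (-((s - 1) * δ)) * |x - y| ^ (-δ) := by
  have hdist : 0 < |x - y| := abs_pos.2 (sub_ne_zero.2 hxy)
  have hmax : 0 < max x y := by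
    rcases hxy.lt_or_gt with h | h
    · exact lt_max_of_lt_right (hx.trans_lt h)
    · exact lt_max_of_lt_left (hy.trans_lt h)
  calc |x ^ s - y ^ s| ^ (-δ)
      ≤ (max x y ^ (s - 1) * |x - y|) ^ (-δ) :=
        Real.rpow_le_rpow_of_nonpos (by positivity) (max_rpow_sub_one_mul_abs_sub_le hs hx hy)
          (by linarith)
    _ = max x y ^ (-((s - 1) * δ)) * |x - y| ^ (-δ) := by
        rw [Real.mul_rpow (by positivity) hdist.le, ← Real.rpow_mul hmax.le, mul_neg]

theorem rpow_neg_le_rpow_negPart_mul_rpow_neg_posPart {a t b : ℝ} (ha : 0 < a) (hat : a ≤ t)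
    (htb : t ≤ b) (γ : ℝ) : t ^ (-γ) ≤ b ^ γ⁻ * a ^ (-γ⁺) := by
  have ht : 0 < t := ha.trans_le hat
  have hb : 0 < b := ht.trans_le htb
  calc t ^ (-γ) = t ^ γ⁻ * t ^ (-γ⁺) := by
        rw [← Real.rpow_add ht]
        congr 1
        linear_combination posPart_sub_negPart γ
    _ ≤ b ^ γ⁻ * a ^ (-γ⁺) := by
        have hnegPart : t ^ γ⁻ ≤ b ^ γ⁻ := Real.rpow_le_rpow ht.le htb (negPart_nonneg γ)
        have hposPart : t ^ (-γ⁺) ≤ a ^ (-γ⁺) :=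
          Real.rpow_le_rpow_of_nonpos ha hat (neg_nonpos.2 (posPart_nonneg γ))
        gcongr

theorem abs_sub_le_max_of_nonneg (hx : 0 ≤ x) (hy : 0 ≤ y) : |x - y| ≤ max x y := by
  rw [← max_sub_min_eq_abs']
  exact sub_le_self _ (le_min hx hy)

theorem abs_sub_le_two_mul_max_abs (x y : ℝ) : |x - y| ≤ 2 * max |x| |y| := by
  linarith [abs_sub x y, le_max_left |x| |y|, le_max_right |x| |y|]

theorem inv_abs_sub_rpow_mul_abs_rpow_sub_rpow_le {δ : ℝ} (hs : 1 ≤ s) (hδ : 0 ≤ δ) (γ : ℝ)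
    (hxy : |x| ≠ |y|) :
    (|x - y| ^ γ * |(|x| ^ s - |y| ^ s)| ^ δ)⁻¹ ≤
      2 ^ γ⁻ * (max |x| |y| ^ (-((s - 1) * δ - γ⁻)) * |(|x| - |y|)| ^ (-(δ + γ⁺))) := by
  set X := max |x| |y|
  set d := |(|x| - |y|)|
  have hd : 0 < d := abs_pos.2 (sub_ne_zero.2 hxy)
  have hX : 0 < X := hd.trans_le (abs_sub_le_max_of_nonneg (abs_nonneg x) (abs_nonneg y))
  calc (|x - y| ^ γ * |(|x| ^ s - |y| ^ s)| ^ δ)⁻¹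
      = |x - y| ^ (-γ) * |(|x| ^ s - |y| ^ s)| ^ (-δ) := by
        rw [mul_inv, Real.rpow_neg (abs_nonneg _), Real.rpow_neg (abs_nonneg _)]
    _ ≤ ((2 * X) ^ γ⁻ * d ^ (-γ⁺)) * (X ^ (-((s - 1) * δ)) * d ^ (-δ)) := by
        gcongr
        · exact rpow_neg_le_rpow_negPart_mul_rpow_neg_posPart hd (abs_abs_sub_abs_le x y)
            (abs_sub_le_two_mul_max_abs x y) γ
        · exact abs_rpow_sub_rpow_rpow_neg_le hs hδ (abs_nonneg x) (abs_nonneg y) hxy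
    _ = 2 ^ γ⁻ * (X ^ (-((s - 1) * δ - γ⁻)) * d ^ (-(δ + γ⁺))) := by
        rw [Real.mul_rpow two_pos.le hX.le, neg_sub, neg_add, sub_eq_add_neg γ⁻,
          Real.rpow_add hX, Real.rpow_add hd]
        ring

theorem rpow_neg_mul_rpow_neg_le {p q θ M X d : ℝ} (hθ : 0 ≤ θ) (hθp : θ ≤ p) (hM : 0 < M)
    (hMX : M ≤ X) (hd : 0 < d) (hdX : d ≤ X) :
    X ^ (-p) * d ^ (-q) ≤ M ^ (-θ) * d ^ (-(p + q - θ)) := by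
  have hX : 0 < X := hM.trans_le hMX
  calc X ^ (-p) * d ^ (-q) = X ^ (-θ) * X ^ (-(p - θ)) * d ^ (-q) := by
        rw [← Real.rpow_add hX]
        ring_nf
    _ ≤ M ^ (-θ) * d ^ (-(p - θ)) * d ^ (-q) := by
        have hXM : X ^ (-θ) ≤ M ^ (-θ) := Real.rpow_le_rpow_of_nonpos hM hMX (by linarith)
        have hXd : X ^ (-(p - θ)) ≤ d ^ (-(p - θ)) :=
          Real.rpow_le_rpow_of_nonpos hd hdX (by linarith)
        gcongr
    _ = M ^ (-θ) * d ^ (-(p + q - θ)) := by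
        rw [mul_assoc, ← Real.rpow_add hd]
        ring_nf

end RealEstimates

section EvenSums

variable {G : Type*} [AddCommGroup G] {g : G → ℝ}

theorem summable_apply_add_add_apply_sub (hsum : Summable g) (m : G) :
    Summable fun n ↦ g (n + m) + g (n - m) :=
  ((Equiv.addRight m).summable_iff.2 hsum).add ((Equiv.subRight m).summable_iff.2 hsum)

variable [LinearOrder G]

theorem apply_abs_sub_abs_le_of_even (hg : g.Even) (hg₀ : ∀ k, 0 ≤ g k) (n m : G) :
    g (|n| - |m|) ≤ g (n + m) + g (n - m) := by
  have heq : g (|n| - |m|) = g (n + m) ∨ g (|n| - |m|) = g (n - m) := by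
    rcases abs_choice n with hn | hn <;> rcases abs_choice m with hm | hm <;> rw [hn, hm]
    · exact .inr rfl
    · exact .inl (by rw [sub_neg_eq_add])
    · exact .inl (by rw [← hg, neg_sub, sub_neg_eq_add, add_comm])
    · exact .inr (by rw [← hg, neg_sub, neg_sub_neg, ← hg, neg_sub])
  rcases heq with h | h <;> rw [h]
  · exact le_add_of_nonneg_right (hg₀ _)
  · exact le_add_of_nonneg_left (hg₀ _)

theorem summable_apply_abs_sub_abs (hg : g.Even) (hg₀ : ∀ k, 0 ≤ g k) (hsum : Summable g) (m : G) :
    Summable fun n ↦ g (|n| - |m|) :=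
  .of_nonneg_of_le (fun _ ↦ hg₀ _) (fun n ↦ apply_abs_sub_abs_le_of_even hg hg₀ n m)
    (summable_apply_add_add_apply_sub hsum m)

theorem tsum_apply_abs_sub_abs_le (hg : g.Even) (hg₀ : ∀ k, 0 ≤ g k) (hsum : Summable g) (m : G) :
    ∑' n, g (|n| - |m|) ≤ 2 * ∑' k, g k := by
  calc ∑' n, g (|n| - |m|) ≤ ∑' n, (g (n + m) + g (n - m)) :=
        (summable_apply_abs_sub_abs hg hg₀ hsum m).tsum_le_tsum
          (fun n ↦ apply_abs_sub_abs_le_of_even hg hg₀ n m)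
          (summable_apply_add_add_apply_sub hsum m)
    _ = ∑' n, g (n + m) + ∑' n, g (n - m) :=
        ((Equiv.addRight m).summable_iff.2 hsum).tsum_add ((Equiv.subRight m).summable_iff.2 hsum)
    _ = 2 * ∑' k, g k := by
        rw [two_mul]
        exact congrArg₂ _ ((Equiv.addRight m).tsum_eq g) ((Equiv.subRight m).tsum_eq g)

end EvenSums

section Coefficients

variable {s δ γ θ : ℝ}

theorem aCoef_nonneg (s δ γ : ℝ) (n m : ℤ) : 0 ≤ aCoef s δ γ n m := by
  unfold aCoef
  positivity

theorem aCoef_le (hs : 1 ≤ s) (hδ : 0 ≤ δ) (hθ : 0 ≤ θ) (hθp : θ ≤ (s - 1) * δ - γ⁻) {n m : ℤ}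
    (hnm : |n| ≠ |m|) :
    aCoef s δ γ n m ≤
      2 ^ γ⁻ * max 1 |(m : ℝ)| ^ (-θ) * |((|n| - |m| : ℤ) : ℝ)| ^ (-(s * δ + γ - θ)) := by
  have hd : 1 ≤ |(|(n : ℝ)| - |(m : ℝ)|)| := by
    exact_mod_cast Int.one_le_abs (sub_ne_zero.2 hnm)
  have hdX : |(|(n : ℝ)| - |(m : ℝ)|)| ≤ max |(n : ℝ)| |(m : ℝ)| :=
    abs_sub_le_max_of_nonneg (abs_nonneg _) (abs_nonneg _)
  have hexp : (s - 1) * δ - γ⁻ + (δ + γ⁺) - θ = s * δ + γ - θ := by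
    linear_combination posPart_sub_negPart γ
  calc aCoef s δ γ n m
      ≤ 2 ^ γ⁻ * (max |(n : ℝ)| |(m : ℝ)| ^ (-((s - 1) * δ - γ⁻)) *
          |(|(n : ℝ)| - |(m : ℝ)|)| ^ (-(δ + γ⁺))) := by
        rw [aCoef, one_div]
        exact inv_abs_sub_rpow_mul_abs_rpow_sub_rpow_le hs hδ γ (by exact_mod_cast hnm)
    _ ≤ 2 ^ γ⁻ * (max 1 |(m : ℝ)| ^ (-θ) *
          |(|(n : ℝ)| - |(m : ℝ)|)| ^ (-((s - 1) * δ - γ⁻ + (δ + γ⁺) - θ))) := by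
        refine mul_le_mul_of_nonneg_left ?_ (by positivity)
        exact rpow_neg_mul_rpow_neg_le hθ hθp (by positivity)
          (max_le (hd.trans hdX) (le_max_right _ _)) (by positivity) hdX
    _ = 2 ^ γ⁻ * max 1 |(m : ℝ)| ^ (-θ) *
          |((|n| - |m| : ℤ) : ℝ)| ^ (-(s * δ + γ - θ)) := by
        rw [hexp, mul_assoc]
        push_cast
        rfl

theorem even_abs_intCast_rpow (r : ℝ) : (fun k : ℤ ↦ |(k : ℝ)| ^ r).Even := fun k ↦ by
  simp only [Int.cast_neg, abs_neg]

theorem summable_abs_abs_sub_abs_rpow_neg {r : ℝ} (hr : 1 < r) (m : ℤ) :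
    Summable fun n : ℤ ↦ |((|n| - |m| : ℤ) : ℝ)| ^ (-r) :=
  summable_apply_abs_sub_abs (even_abs_intCast_rpow (-r)) (fun _ ↦ by positivity)
    (Real.summable_abs_int_rpow hr) m

theorem summable_aCoef (hs : 1 ≤ s) (hδ : 0 ≤ δ) (hγ : γ⁻ ≤ (s - 1) * δ) (hsγ : 1 < s * δ + γ)
    (m : ℤ) : Summable fun n : {n : ℤ // |n| ≠ |m|} ↦ aCoef s δ γ n m :=
  .of_nonneg_of_le (fun n ↦ aCoef_nonneg s δ γ n m)
    (fun n ↦ aCoef_le hs hδ le_rfl (sub_nonneg.2 hγ) n.2)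
    (((summable_abs_abs_sub_abs_rpow_neg (by rwa [sub_zero]) m).subtype _).mul_left _)

theorem tsum_aCoef_le (hs : 1 ≤ s) (hδ : 0 ≤ δ) (hθ : 0 ≤ θ) (hθp : θ ≤ (s - 1) * δ - γ⁻)
    (hθr : 1 < s * δ + γ - θ) (m : ℤ) :
    ∑' n : {n : ℤ // |n| ≠ |m|}, aCoef s δ γ n m ≤
      2 ^ γ⁻ * max 1 |(m : ℝ)| ^ (-θ) * (2 * ∑' k : ℤ, |(k : ℝ)| ^ (-(s * δ + γ - θ))) := by
  set r := s * δ + γ - θ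
  have hsum := summable_abs_abs_sub_abs_rpow_neg hθr m
  calc ∑' n : {n : ℤ // |n| ≠ |m|}, aCoef s δ γ n m
      ≤ ∑' n : {n : ℤ // |n| ≠ |m|},
          2 ^ γ⁻ * max 1 |(m : ℝ)| ^ (-θ) * |((|n.1| - |m| : ℤ) : ℝ)| ^ (-r) :=
        (summable_aCoef hs hδ (by linarith) (by linarith) m).tsum_le_tsum
          (fun n ↦ aCoef_le hs hδ hθ hθp n.2) ((hsum.subtype _).mul_left _)
    _ = 2 ^ γ⁻ * max 1 |(m : ℝ)| ^ (-θ) *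
          ∑' n : {n : ℤ // |n| ≠ |m|}, |((|n.1| - |m| : ℤ) : ℝ)| ^ (-r) := tsum_mul_left
    _ ≤ 2 ^ γ⁻ * max 1 |(m : ℝ)| ^ (-θ) * ∑' n : ℤ, |((|n| - |m| : ℤ) : ℝ)| ^ (-r) := by
        gcongr
        exact hsum.tsum_subtype_le _ {n | |n| ≠ |m|} (fun _ ↦ by positivity)
    _ ≤ 2 ^ γ⁻ * max 1 |(m : ℝ)| ^ (-θ) * (2 * ∑' k : ℤ, |(k : ℝ)| ^ (-r)) := by
        gcongr
        exact tsum_apply_abs_sub_abs_le (even_abs_intCast_rpow (-r)) (fun _ ↦ by positivity)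
          (Real.summable_abs_int_rpow hθr) m

theorem tendsto_max_one_abs_intCast_rpow_neg (hθ : 0 < θ) :
    Tendsto (fun m : ℤ ↦ max 1 |(m : ℝ)| ^ (-θ)) (comap abs atTop) (𝓝 0) := by
  have habs : Tendsto (fun m : ℤ ↦ |(m : ℝ)|) (comap abs atTop) atTop := by
    simpa only [Function.comp_def, Int.cast_abs] using
      (tendsto_intCast_atTop_atTop (R := ℝ)).comp (tendsto_comap (f := (abs : ℤ → ℤ)))
  exact (tendsto_rpow_neg_atTop hθ).comp (tendsto_atTop_mono (fun _ ↦ le_max_right _ _) habs)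

theorem tendsto_tsum_aCoef (hs : 1 ≤ s) (hδ : 0 ≤ δ) (hγ : γ⁻ < (s - 1) * δ)
    (hsγ : 1 < s * δ + γ) :
    Tendsto (fun m : ℤ ↦ ∑' n : {n : ℤ // |n| ≠ |m|}, aCoef s δ γ n m) (comap abs atTop) (𝓝 0) := by
  obtain ⟨θ, hθ, hθ_lt⟩ : ∃ θ, 0 < θ ∧ θ < min ((s - 1) * δ - γ⁻) (s * δ + γ - 1) :=
    exists_between (lt_min (sub_pos.2 hγ) (sub_pos.2 hsγ))
  obtain ⟨hθp, hθr⟩ := lt_min_iff.1 hθ_lt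
  refine squeeze_zero (fun m ↦ tsum_nonneg fun n ↦ aCoef_nonneg s δ γ n m)
    (tsum_aCoef_le hs hδ hθ.le hθp.le (by linarith)) ?_
  simpa only [mul_zero, zero_mul] using
    ((tendsto_max_one_abs_intCast_rpow_neg hθ).const_mul (2 ^ γ⁻)).mul_const _

end Coefficients

/-- **Lemma `lem:sum-unified` (b): decay of `S_m`.**
Under the stated conditions, for every `m` the series
`S_m = ∑_{|n| ≠ |m|} a_{n,m}` converges, and `S_m → 0` as `|m| → ∞`. -/
theorem sum_decay
    (s δ γ : ℝ) (hs : 1 < s) (hδ : 0 < δ)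
    (hcond₁ : 0 ≤ γ → 1 < s * δ + γ)
    (hcond₂ : γ < 0 → max 1 δ < s * δ + γ) :
    (∀ m : ℤ, Summable (fun n : {n : ℤ // |n| ≠ |m|} => aCoef s δ γ n m)) ∧
    (∀ ε : ℝ, 0 < ε → ∃ M : ℕ, ∀ m : ℤ, (M : ℤ) ≤ |m| →
      (∑' n : {n : ℤ // |n| ≠ |m|}, aCoef s δ γ n m) < ε) := by
  obtain ⟨hγ, hsγ⟩ : γ⁻ < (s - 1) * δ ∧ 1 < s * δ + γ := by
    rcases le_or_gt 0 γ with h | h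
    · rw [negPart_of_nonneg h]
      exact ⟨mul_pos (sub_pos.2 hs) hδ, hcond₁ h⟩
    · obtain ⟨h_one, h_delta⟩ := max_lt_iff.1 (hcond₂ h)
      rw [negPart_of_nonpos h.le]
      exact ⟨by linarith, h_one⟩
  refine ⟨summable_aCoef hs.le hδ.le hγ.le hsγ, fun ε hε ↦ ?_⟩
  have hlt := (tendsto_tsum_aCoef hs.le hδ.le hγ hsγ).eventually_lt_const hε
  obtain ⟨A, hA⟩ := eventually_atTop.1 (eventually_comap.1 hlt)
  exact ⟨A.toNat, fun m hm ↦ hA |m| (A.self_le_toNat.trans hm) m rfl⟩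
end

section
/- Let α > 1 and s ≥ 3/2, and let p : [0,∞) → ℝ satisfy Assumption (H_α) with parameters 0 < c₁ < c₂ and c₃ > 0. For every C̃ > 0 there exists T_min = T(p, C̃) > 0 such that: if T > 0 is such that the inequality C̃ · ∑_{n∈ℤ} |c_n|² ≤ (1/T) ∫₀^T |∑_{n∈ℤ} c_n e^{2πi(n·p(t) + |n|^s·t)}|² dt holds for every finitely supported sequence (c_n)_{n∈ℤ} of complex numbers, then T ≥ T_min. -/
open MeasureTheory Set

/-!
At `t = 0` the exponentials are just complex numbers, and any two complex numbers are linearly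
dependent over `ℂ`. Fix a nonzero finitely supported `c` realizing such a dependence: the
corresponding sum is right-continuous in `t` and vanishes at `t = 0`, so the average of its squared
modulus over `[0, T]` tends to `0` as `T → 0⁺`, while `∑ |c_n|²` stays a fixed positive number.
-/

open Filter Topology Finsupp

theorem tendsto_inv_smul_integral_nhdsGT {E : Type*} [NormedAddCommGroup E]
    [NormedSpace ℝ E] [CompleteSpace E] {g : ℝ → E} {a : ℝ}
    (hmeas : StronglyMeasurableAtFilter g (𝓝[>] a)) (hcont : ContinuousWithinAt g (Ioi a) a) :
    Tendsto (fun b : ℝ => (b - a)⁻¹ • ∫ t in a..b, g t) (𝓝[>] a) (𝓝 (g a)) := by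
  have hderiv : HasDerivWithinAt (fun b : ℝ => ∫ t in a..b, g t) (g a) (Ici a) a :=
    intervalIntegral.integral_hasDerivWithinAt_right .refl hmeas hcont
  simpa [slope_fun_def] using
    (hasDerivWithinAt_iff_tendsto_slope' self_notMem_Ioi).1 hderiv.Ioi_of_Ici

theorem tsum_eq_finsuppSum {ι M N : Type*} [Zero M] [AddCommMonoid N] [TopologicalSpace N]
    (c : ι →₀ M) {h : ι → M → N} (hzero : ∀ n, h n 0 = 0) :
    ∑' n, h n (c n) = c.sum h :=
  tsum_eq_sum fun n hn => by rw [notMem_support_iff.1 hn, hzero]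

theorem finsuppSum_norm_sq_pos {ι E : Type*} [NormedAddCommGroup E] {c : ι →₀ E} (hc : c ≠ 0) :
    0 < c.sum fun _ z => ‖z‖ ^ 2 :=
  Finset.sum_pos (fun n hn => by have := mem_support_iff.1 hn; positivity)
    (support_nonempty_iff.2 hc)

theorem not_linearIndependent_of_nontrivial {ι K : Type*} [CommSemiring K] [Nontrivial K]
    [Nontrivial ι] (v : ι → K) : ¬ LinearIndependent K v := fun hv => by
  have hcard := hv.cardinal_lift_le_rank
  rw [CommSemiring.rank_self, Cardinal.lift_one, Cardinal.lift_le_one_iff,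
    Cardinal.le_one_iff_subsingleton] at hcard
  exact not_subsingleton ι hcard

section Family

variable {ι 𝕜 E : Type*} [NormedField 𝕜] [NormedAddCommGroup E] [NormedSpace 𝕜 E]
  {f : ι → ℝ → E}

theorem tendsto_average_norm_sq_linearCombination
    (hmeas : ∀ n, AEStronglyMeasurable (f n) (volume.restrict (Ioi 0)))
    (hcont : ∀ n, ContinuousWithinAt (f n) (Ioi 0) 0) (c : ι →₀ 𝕜) :
    Tendsto (fun T : ℝ => (1 / T) * ∫ t in (0 : ℝ)..T, ‖linearCombination 𝕜 (f · t) c‖ ^ 2)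
      (𝓝[>] 0) (𝓝 (‖linearCombination 𝕜 (f · 0) c‖ ^ 2)) := by
  simp only [linearCombination_apply, Finsupp.sum]
  have hsum_meas : AEStronglyMeasurable (fun t => ∑ n ∈ c.support, c n • f n t)
      (volume.restrict (Ioi 0)) :=
    Finset.aestronglyMeasurable_fun_sum _ fun n _ => (hmeas n).const_smul (c n)
  have hsum_cont : ContinuousWithinAt (fun t => ∑ n ∈ c.support, c n • f n t) (Ioi 0) 0 :=
    tendsto_finsetSum _ fun n _ => (hcont n).const_smul (c n)
  simpa using tendsto_inv_smul_integral_nhdsGT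
    ⟨Ioi 0, self_mem_nhdsWithin, hsum_meas.norm.pow 2⟩ (hsum_cont.norm.pow 2)

theorem exists_finsupp_forall_eventually_average_lt
    (hmeas : ∀ n, AEStronglyMeasurable (f n) (volume.restrict (Ioi 0)))
    (hcont : ∀ n, ContinuousWithinAt (f n) (Ioi 0) 0)
    (hdep : ¬ LinearIndependent 𝕜 (f · 0)) :
    ∃ c : ι →₀ 𝕜, ∀ C : ℝ, 0 < C → ∀ᶠ T in 𝓝[>] (0 : ℝ),
      (1 / T) * ∫ t in (0 : ℝ)..T, ‖linearCombination 𝕜 (f · t) c‖ ^ 2 <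
        C * c.sum fun _ z => ‖z‖ ^ 2 := by
  obtain ⟨c, hc_comb, hc⟩ := not_linearIndependent_iff_linearCombination.1 hdep
  have haverage := tendsto_average_norm_sq_linearCombination hmeas hcont c
  rw [hc_comb, norm_zero, zero_pow two_ne_zero] at haverage
  exact ⟨c, fun C hC => haverage.eventually_lt_const (mul_pos hC (finsuppSum_norm_sq_pos hc))⟩

theorem exists_minimal_time_of_not_linearIndependent
    (hmeas : ∀ n, AEStronglyMeasurable (f n) (volume.restrict (Ioi 0)))
    (hcont : ∀ n, ContinuousWithinAt (f n) (Ioi 0) 0)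
    (hdep : ¬ LinearIndependent 𝕜 (f · 0)) {C : ℝ} (hC : 0 < C) :
    ∃ Tmin : ℝ, 0 < Tmin ∧ ∀ T : ℝ, 0 < T →
      (∀ c : ι → 𝕜, {n | c n ≠ 0}.Finite →
        C * ∑' n, ‖c n‖ ^ 2 ≤ (1 / T) * ∫ t in (0 : ℝ)..T, ‖∑' n, c n • f n t‖ ^ 2) →
      Tmin ≤ T := by
  obtain ⟨c, haverage⟩ := exists_finsupp_forall_eventually_average_lt hmeas hcont hdep
  obtain ⟨Tmin, hTmin, hviolated⟩ := mem_nhdsGT_iff_exists_Ioo_subset.1 (haverage C hC)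
  refine ⟨Tmin, hTmin, fun T hT hineq => le_of_not_gt fun hlt => ?_⟩
  have hineq_c := hineq c c.hasFiniteSupport
  have hsum (t : ℝ) : ∑' n, c n • f n t = linearCombination 𝕜 (f · t) c :=
    tsum_eq_finsuppSum c (h := fun n z => z • f n t) fun n => zero_smul 𝕜 (f n t)
  have hnorm : ∑' n, ‖c n‖ ^ 2 = c.sum fun _ z => ‖z‖ ^ 2 :=
    tsum_eq_finsuppSum c (h := fun _ z => ‖z‖ ^ 2) fun _ => by simp
  simp only [hsum, hnorm] at hineq_c
  exact hineq_c.not_gt (hviolated ⟨hT, hlt⟩)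

end Family

theorem minimal_time_needed_general {ι : Type*} [Nontrivial ι] {φ : ι → ℝ → ℝ}
    (hmeas : ∀ n, AEStronglyMeasurable (φ n) (volume.restrict (Ioi 0)))
    (hcont : ∀ n, ContinuousWithinAt (φ n) (Ioi 0) 0) {C : ℝ} (hC : 0 < C) :
    ∃ Tmin : ℝ, 0 < Tmin ∧ ∀ T : ℝ, 0 < T →
      (∀ c : ι → ℂ, {n | c n ≠ 0}.Finite →
        C * ∑' n, ‖c n‖ ^ 2 ≤ (1 / T) * ∫ t in (0 : ℝ)..T,
          ‖∑' n, c n * Complex.exp (2 * Real.pi * Complex.I * (φ n t : ℂ))‖ ^ 2) →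
      Tmin ≤ T := by
  have hexp : Continuous fun x : ℝ => Complex.exp (2 * Real.pi * Complex.I * (x : ℂ)) := by
    fun_prop
  exact exists_minimal_time_of_not_linearIndependent (𝕜 := ℂ)
    (fun n => hexp.comp_aestronglyMeasurable (hmeas n))
    (fun n => hexp.continuousAt.comp_continuousWithinAt (hcont n))
    (not_linearIndependent_of_nontrivial _) hC

/-- **The minimal-time condition in the curved Ingham inequality cannot be removed.**
For every `C̃ > 0` there exists `T_min > 0` such that whenever the lower observability
inequality with constant `C̃` holds on `[0,T]` for all finitely supported sequences,
then `T ≥ T_min`. -/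
theorem minimal_time_needed
    (α s c₁ c₂ c₃ : ℝ) (hα : 1 < α) (hs : 3 / 2 ≤ s)
    (hc₁ : 0 < c₁) (hc₁₂ : c₁ < c₂) (hc₃ : 0 < c₃)
    (p : ℝ → ℝ) (hp : AssumptionH α c₁ c₂ c₃ p) :
    ∀ Ctil : ℝ, 0 < Ctil → ∃ Tmin : ℝ, 0 < Tmin ∧
      ∀ T : ℝ, 0 < T →
        (∀ c : ℤ → ℂ, {n : ℤ | c n ≠ 0}.Finite →
          Ctil * ∑' n : ℤ, ‖c n‖ ^ 2 ≤
            (1 / T) * ∫ t in (0:ℝ)..T,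
              ‖∑' n : ℤ, c n * Complex.exp (2 * Real.pi * Complex.I *
                ((n : ℂ) * (p t : ℂ) + ((|(n : ℝ)| ^ s : ℝ) : ℂ) * (t : ℂ)))‖ ^ 2) →
        Tmin ≤ T := by
  intro C hC
  have hphase (n : ℤ) : ContinuousOn (fun t => n * p t + |(n : ℝ)| ^ s * t) (Ici 0) :=
    (hp.1.continuousOn.const_mul _).add (by fun_prop)
  simpa using minimal_time_needed_general
    (fun n => ((hphase n).mono Ioi_subset_Ici_self).aestronglyMeasurable measurableSet_Ioi)
    (fun n => (hphase n 0 self_mem_Ici).mono Ioi_subset_Ici_self) hC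
end

section
/- Let s > 0 and let μ be a probability measure on ℝ² whose Fourier transform satisfies |μ̂(ξ)| ≤ C₀ (1 + |ξ|)^{−δ} for all ξ ∈ ℝ², for some constants C₀ > 0 and δ > 0, and let 0 < η < 1 be such that |μ̂(ξ)| ≤ η whenever |ξ| ≥ 1. Fix an integer N ≥ 2. Then there exists ζ(μ, N) > 0 such that for every s ≥ ζ(μ, N) and every finitely supported family (c_n)_{|n|≥N} of complex numbers, ((1 − η)/2) ∑_{|n|≥N} |c_n|² ≤ ∫_{ℝ²} |∑_{|n|≥N} c_n e^{2πi(|n|^s t + n x)}|² dμ(t,x) ≤ ((3 + η)/2) ∑_{|n|≥N} |c_n|². -/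
open MeasureTheory

/-- The Fourier transform of a measure `μ` on `ℝ²`:
`μ̂(ξ) = ∫ e^{−2πi⟨ξ,z⟩} dμ(z)`. -/
noncomputable def fourierMeasure (μ : Measure (ℝ × ℝ)) (ξ : ℝ × ℝ) : ℂ :=
  ∫ z : ℝ × ℝ, Complex.exp (-(2 * Real.pi * Complex.I) *
    ((ξ.1 * z.1 + ξ.2 * z.2 : ℝ) : ℂ)) ∂μ

/-!
Expanding the square writes the integral as the quadratic form of the matrix `μ̂(ξ_m - ξ_n)`, where
`ξ_n = (|n|^s, n)`. Its diagonal is the mass of `μ`, so by Schur's test it suffices to bound the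
off-diagonal row sums. In row `n`, the entry `m = -n` is the only one where the first coordinates of
the frequencies do not separate; it is at most `η`. For all other `m`, the mean value estimate
`||m|^s - |n|^s| ≥ |m|^(s-1)` and the decay of `μ̂` bound the entry by `C₀ |m|^(-δ(s-1))`, and
the sum of these over `|m| ≥ 2` tends to `0` as `s → ∞`.
-/

open Filter Topology ComplexConjugate

section PowerGaps

variable {a b s : ℝ}

lemma rpow_sub_one_le_rpow_sub_rpow (ha : 0 ≤ a) (hab : a + 1 ≤ b) (hs : 1 ≤ s) :
    b ^ (s - 1) ≤ b ^ s - a ^ s := by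
  have rpow_eq_mul {x : ℝ} (hx : 0 ≤ x) : x ^ s = x * x ^ (s - 1) := by
    rw [← Real.rpow_one_add' hx (by linarith), add_sub_cancel]
  have hb : 0 ≤ b := by linarith
  have hmono : a ^ (s - 1) ≤ b ^ (s - 1) := Real.rpow_le_rpow ha (by linarith) (by linarith)
  calc b ^ (s - 1) = (a + 1) * b ^ (s - 1) - a * b ^ (s - 1) := by ring
    _ ≤ b * b ^ (s - 1) - a * a ^ (s - 1) := by gcongr
    _ = b ^ s - a ^ s := by rw [rpow_eq_mul ha, rpow_eq_mul hb]

lemma rpow_sub_one_le_abs_rpow_sub_rpow (ha : 0 ≤ a) (hb : 0 ≤ b) (hab : 1 ≤ |b - a|)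
    (hs : 1 ≤ s) : b ^ (s - 1) ≤ |b ^ s - a ^ s| := by
  rcases le_abs.1 hab with h | h
  · exact (rpow_sub_one_le_rpow_sub_rpow ha (by linarith) hs).trans (le_abs_self _)
  · calc b ^ (s - 1) ≤ a ^ (s - 1) := Real.rpow_le_rpow hb (by linarith) (by linarith)
      _ ≤ a ^ s - b ^ s := rpow_sub_one_le_rpow_sub_rpow hb (by linarith) hs
      _ ≤ |b ^ s - a ^ s| := by rw [abs_sub_comm]; exact le_abs_self _

end PowerGaps

lemma rpow_neg_le_half_rpow_mul_one_div_sq {x p : ℝ} (hx : 2 ≤ x) (hp : 2 ≤ p) :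
    x ^ (-p) ≤ (1 / 2) ^ (p - 2) * (1 / x ^ 2) := by
  have hx₀ : 0 < x := by linarith
  calc x ^ (-p) = (1 / x) ^ (p - 2) * (1 / x ^ 2) := by
        rw [one_div, one_div, Real.inv_rpow hx₀.le, ← Real.rpow_neg hx₀.le, ← Real.rpow_two,
          ← Real.rpow_neg hx₀.le, ← Real.rpow_add hx₀]
        ring_nf
    _ ≤ (1 / 2) ^ (p - 2) * (1 / x ^ 2) := by gcongr

lemma eventually_sum_abs_rpow_neg_le {ε : ℝ} (hε : 0 < ε) :
    ∀ᶠ p : ℝ in atTop, ∀ S : Finset ℤ, (∀ m ∈ S, 2 ≤ |m|) → ∑ m ∈ S, |(m : ℝ)| ^ (-p) ≤ ε := by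
  have hsummable : Summable fun m : ℤ => 1 / (m : ℝ) ^ 2 :=
    Real.summable_one_div_int_pow.2 one_lt_two
  have hlim : Tendsto (fun p : ℝ => (1 / 2 : ℝ) ^ (p - 2) * ∑' m : ℤ, 1 / (m : ℝ) ^ 2)
      atTop (𝓝 0) := by
    have hpow : Tendsto (fun p : ℝ => (1 / 2 : ℝ) ^ p) atTop (𝓝 0) :=
      tendsto_rpow_atTop_of_base_lt_one (1 / 2) (by norm_num) (by norm_num)
    have hshift : Tendsto (fun p : ℝ => p - 2) atTop atTop :=
      tendsto_atTop_add_const_right atTop (-2) tendsto_id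
    simpa only [zero_mul, Function.comp_apply] using
      (hpow.comp hshift).mul_const (∑' m : ℤ, 1 / (m : ℝ) ^ 2)
  filter_upwards [hlim.eventually_le_const hε, eventually_ge_atTop 2] with p hpε hp S hS
  calc ∑ m ∈ S, |(m : ℝ)| ^ (-p)
      ≤ ∑ m ∈ S, (1 / 2 : ℝ) ^ (p - 2) * (1 / (m : ℝ) ^ 2) := by
        refine Finset.sum_le_sum fun m hm => ?_
        rw [← sq_abs]
        exact rpow_neg_le_half_rpow_mul_one_div_sq (mod_cast hS m hm) hp
    _ ≤ (1 / 2) ^ (p - 2) * ∑' m : ℤ, 1 / (m : ℝ) ^ 2 := by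
        rw [← Finset.mul_sum]
        gcongr
        exact hsummable.sum_le_tsum S fun m _ => by positivity
    _ ≤ ε := hpε

lemma sum_sum_erase_mul_le_of_sum_erase_le {ι : Type*} [DecidableEq ι] {S : Finset ι}
    {W : ι → ι → ℝ} {R : ℝ} (hW : ∀ n m, 0 ≤ W n m) (hsymm : ∀ n m, W n m = W m n)
    (hrow : ∀ n ∈ S, ∑ m ∈ S.erase n, W n m ≤ R) (a : ι → ℝ) :
    ∑ n ∈ S, ∑ m ∈ S.erase n, a n * a m * W n m ≤ R * ∑ n ∈ S, a n ^ 2 := by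
  have hswap : ∑ n ∈ S, ∑ m ∈ S.erase n, a m ^ 2 * W n m =
      ∑ n ∈ S, ∑ m ∈ S.erase n, a n ^ 2 * W n m := by
    rw [Finset.sum_comm' (t' := S) (s' := S.erase) (by grind)]
    simp_rw [hsymm]
  calc ∑ n ∈ S, ∑ m ∈ S.erase n, a n * a m * W n m
      ≤ ∑ n ∈ S, ∑ m ∈ S.erase n, (a n ^ 2 * W n m + a m ^ 2 * W n m) / 2 := by
        gcongr with n _ m _
        nlinarith [mul_nonneg (sq_nonneg (a n - a m)) (hW n m)]
    _ = ∑ n ∈ S, a n ^ 2 * ∑ m ∈ S.erase n, W n m := by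
        simp_rw [← Finset.sum_div, Finset.sum_add_distrib, hswap, Finset.mul_sum]
        ring
    _ ≤ ∑ n ∈ S, a n ^ 2 * R := by
        gcongr with n hn
        exact hrow n hn
    _ = R * ∑ n ∈ S, a n ^ 2 := by rw [← Finset.sum_mul, mul_comm]

/-- The character `z ↦ e^{2πi⟨ξ,z⟩}` of `ℝ²` with frequency `ξ`. -/
noncomputable def planeWave (ξ z : ℝ × ℝ) : ℂ :=
  Complex.exp (2 * Real.pi * Complex.I * ((ξ.1 * z.1 + ξ.2 * z.2 : ℝ) : ℂ))

section PlaneWaves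

lemma norm_planeWave (ξ z : ℝ × ℝ) : ‖planeWave ξ z‖ = 1 := by
  simp [planeWave, Complex.norm_exp]

@[fun_prop]
lemma continuous_planeWave (ξ : ℝ × ℝ) : Continuous (planeWave ξ) := by
  unfold planeWave
  fun_prop

lemma conj_planeWave (ξ z : ℝ × ℝ) : conj (planeWave ξ z) = planeWave (-ξ) z := by
  simp only [planeWave, ← Complex.exp_conj, map_mul, map_ofNat, Complex.conj_ofReal,
    Complex.conj_I, Prod.fst_neg, Prod.snd_neg]
  push_cast
  ring_nf

lemma planeWave_mul_conj (ξ ξ' z : ℝ × ℝ) :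
    planeWave ξ z * conj (planeWave ξ' z) = planeWave (ξ - ξ') z := by
  rw [conj_planeWave, planeWave, planeWave, planeWave, ← Complex.exp_add]
  simp only [Prod.fst_neg, Prod.snd_neg, Prod.fst_sub, Prod.snd_sub]
  push_cast
  ring_nf

lemma fourierMeasure_eq_integral_planeWave (μ : Measure (ℝ × ℝ)) (ξ : ℝ × ℝ) :
    fourierMeasure μ ξ = ∫ z, planeWave (-ξ) z ∂μ := by
  simp only [fourierMeasure, planeWave, Prod.fst_neg, Prod.snd_neg]
  push_cast
  ring_nf

lemma norm_fourierMeasure_neg (μ : Measure (ℝ × ℝ)) (ξ : ℝ × ℝ) :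
    ‖fourierMeasure μ (-ξ)‖ = ‖fourierMeasure μ ξ‖ := by
  simp_rw [fourierMeasure_eq_integral_planeWave, ← conj_planeWave (-ξ), integral_conj,
    RCLike.norm_conj]

lemma fourierMeasure_zero (μ : Measure (ℝ × ℝ)) : fourierMeasure μ 0 = μ.real Set.univ := by
  simp [fourierMeasure]

variable {ι : Type*} (μ : Measure (ℝ × ℝ)) [IsFiniteMeasure μ]

lemma integrable_planeWave (ξ : ℝ × ℝ) : Integrable (planeWave ξ) μ :=
  .of_bound (by fun_prop) 1 (.of_forall fun z => (norm_planeWave ξ z).le)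

lemma integral_norm_sq_sum_planeWave (ξ : ι → ℝ × ℝ) (S : Finset ι) (c : ι → ℂ) :
    ((∫ z, ‖∑ n ∈ S, c n * planeWave (ξ n) z‖ ^ 2 ∂μ : ℝ) : ℂ) =
      ∑ n ∈ S, ∑ m ∈ S, c n * conj (c m) * fourierMeasure μ (ξ m - ξ n) := by
  have hexpand (z : ℝ × ℝ) : ((‖∑ n ∈ S, c n * planeWave (ξ n) z‖ ^ 2 : ℝ) : ℂ) =
      ∑ n ∈ S, ∑ m ∈ S, c n * conj (c m) * planeWave (ξ n - ξ m) z := by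
    rw [Complex.ofReal_pow, ← Complex.mul_conj', map_sum, Finset.sum_mul_sum]
    simp_rw [← planeWave_mul_conj, map_mul, mul_mul_mul_comm]
  have hint (n m : ι) :
      Integrable (fun z => c n * conj (c m) * planeWave (ξ n - ξ m) z) μ :=
    (integrable_planeWave μ _).const_mul _
  simp_rw [← integral_complex_ofReal, hexpand, fourierMeasure_eq_integral_planeWave, neg_sub]
  rw [integral_finsetSum _ fun n _ => integrable_finsetSum _ fun m _ => hint n m]
  simp_rw [integral_finsetSum _ fun m _ => hint _ m, integral_const_mul]

lemma integral_norm_sq_sum_planeWave_sub [DecidableEq ι] (ξ : ι → ℝ × ℝ) (S : Finset ι)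
    (c : ι → ℂ) :
    (((∫ z, ‖∑ n ∈ S, c n * planeWave (ξ n) z‖ ^ 2 ∂μ) -
        μ.real Set.univ * ∑ n ∈ S, ‖c n‖ ^ 2 : ℝ) : ℂ) =
      ∑ n ∈ S, ∑ m ∈ S.erase n, c n * conj (c m) * fourierMeasure μ (ξ m - ξ n) := by
  have hdiag (n : ι) : c n * conj (c n) * fourierMeasure μ (ξ n - ξ n) =
      ((μ.real Set.univ * ‖c n‖ ^ 2 : ℝ) : ℂ) := by
    rw [sub_self, fourierMeasure_zero, Complex.mul_conj', mul_comm]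
    push_cast
    rfl
  rw [Complex.ofReal_sub, integral_norm_sq_sum_planeWave, Finset.mul_sum, Complex.ofReal_sum,
    ← Finset.sum_sub_distrib]
  refine Finset.sum_congr rfl fun n hn => ?_
  rw [← Finset.add_sum_erase S _ hn, hdiag, add_sub_cancel_left]

lemma abs_integral_norm_sq_sum_planeWave_sub_le [DecidableEq ι] {ξ : ι → ℝ × ℝ} {S : Finset ι}
    {R : ℝ} (hrow : ∀ n ∈ S, ∑ m ∈ S.erase n, ‖fourierMeasure μ (ξ m - ξ n)‖ ≤ R) (c : ι → ℂ) :
    |(∫ z, ‖∑ n ∈ S, c n * planeWave (ξ n) z‖ ^ 2 ∂μ) - μ.real Set.univ * ∑ n ∈ S, ‖c n‖ ^ 2| ≤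
      R * ∑ n ∈ S, ‖c n‖ ^ 2 := by
  rw [← Real.norm_eq_abs, ← Complex.norm_real, integral_norm_sq_sum_planeWave_sub]
  calc _ ≤ ∑ n ∈ S, ∑ m ∈ S.erase n, ‖c n‖ * ‖c m‖ * ‖fourierMeasure μ (ξ m - ξ n)‖ := by
        refine norm_sum_le_of_le _ fun n _ => norm_sum_le_of_le _ fun m _ => ?_
        rw [norm_mul, norm_mul, RCLike.norm_conj]
    _ ≤ R * ∑ n ∈ S, ‖c n‖ ^ 2 :=
        sum_sum_erase_mul_le_of_sum_erase_le (fun _ _ => norm_nonneg _)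
          (fun n m => by rw [← norm_fourierMeasure_neg, neg_sub]) hrow fun n => ‖c n‖

end PlaneWaves

/-- The frequency `(|n|^s, n)` of the `n`-th mode of the periodic dispersive equation with
dispersion relation `|n|^s`. -/
noncomputable def dispersiveFreq (s : ℝ) (n : ℤ) : ℝ × ℝ := (|(n : ℝ)| ^ s, n)

section DispersiveFrequencies

lemma planeWave_dispersiveFreq (s : ℝ) (n : ℤ) (z : ℝ × ℝ) :
    planeWave (dispersiveFreq s n) z = Complex.exp (2 * Real.pi * Complex.I *
      (((|(n : ℝ)| ^ s : ℝ) : ℂ) * (z.1 : ℂ) + (n : ℂ) * (z.2 : ℂ))) := by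
  simp [planeWave, dispersiveFreq]

lemma dispersiveFreq_neg_sub (s : ℝ) (n : ℤ) :
    dispersiveFreq s (-n) - dispersiveFreq s n = -(0, 2 * (n : ℝ)) := by
  ext
  · simp [dispersiveFreq]
  · simp only [dispersiveFreq, Int.cast_neg, Prod.snd_sub, Prod.snd_neg]
    ring

lemma abs_rpow_sub_one_le_norm_dispersiveFreq_sub {s : ℝ} (hs : 1 ≤ s) {n m : ℤ}
    (hnm : |n| ≠ |m|) : |(m : ℝ)| ^ (s - 1) ≤ ‖dispersiveFreq s m - dispersiveFreq s n‖ := by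
  have hgap : (1 : ℝ) ≤ |(|(m : ℝ)| - |(n : ℝ)|)| := by
    exact_mod_cast Int.one_le_abs (sub_ne_zero.2 hnm.symm)
  exact (rpow_sub_one_le_abs_rpow_sub_rpow (abs_nonneg _) (abs_nonneg _) hgap hs).trans
    (norm_fst_le (dispersiveFreq s m - dispersiveFreq s n))

variable {μ : Measure (ℝ × ℝ)} {C₀ δ η s : ℝ}

lemma nonneg_of_norm_fourierMeasure_le
    (hdecay : ∀ ξ : ℝ × ℝ, ‖fourierMeasure μ ξ‖ ≤ C₀ * (1 + ‖ξ‖) ^ (-δ)) : 0 ≤ C₀ := by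
  simpa using (norm_nonneg _).trans (hdecay 0)

lemma norm_fourierMeasure_dispersiveFreq_sub_le (hδ : 0 ≤ δ)
    (hdecay : ∀ ξ : ℝ × ℝ, ‖fourierMeasure μ ξ‖ ≤ C₀ * (1 + ‖ξ‖) ^ (-δ)) (hs : 1 ≤ s)
    {n m : ℤ} (hm : m ≠ 0) (hnm : |n| ≠ |m|) :
    ‖fourierMeasure μ (dispersiveFreq s m - dispersiveFreq s n)‖ ≤
      C₀ * |(m : ℝ)| ^ (-(δ * (s - 1))) := by
  set ξ := dispersiveFreq s m - dispersiveFreq s n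
  have hm₀ : 0 < |(m : ℝ)| := by positivity
  have hgap : |(m : ℝ)| ^ (s - 1) ≤ 1 + ‖ξ‖ := by
    linarith [abs_rpow_sub_one_le_norm_dispersiveFreq_sub hs hnm]
  have hC₀ : 0 ≤ C₀ := nonneg_of_norm_fourierMeasure_le hdecay
  calc ‖fourierMeasure μ ξ‖ ≤ C₀ * (1 + ‖ξ‖) ^ (-δ) := hdecay ξ
    _ ≤ C₀ * (|(m : ℝ)| ^ (s - 1)) ^ (-δ) := by
        refine mul_le_mul_of_nonneg_left ?_ hC₀
        exact Real.rpow_le_rpow_of_nonpos (by positivity) hgap (neg_nonpos.2 hδ)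
    _ = C₀ * |(m : ℝ)| ^ (-(δ * (s - 1))) := by
        rw [← Real.rpow_mul hm₀.le]
        ring_nf

lemma sum_erase_norm_fourierMeasure_dispersiveFreq_sub_le (hδ : 0 ≤ δ)
    (hdecay : ∀ ξ : ℝ × ℝ, ‖fourierMeasure μ ξ‖ ≤ C₀ * (1 + ‖ξ‖) ^ (-δ)) (hs : 1 ≤ s)
    {n : ℤ} (hη : ‖fourierMeasure μ (0, 2 * n)‖ ≤ η) {S : Finset ℤ} (hS : 0 ∉ S) :
    ∑ m ∈ S.erase n, ‖fourierMeasure μ (dispersiveFreq s m - dispersiveFreq s n)‖ ≤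
      η + C₀ * ∑ m ∈ S, |(m : ℝ)| ^ (-(δ * (s - 1))) := by
  have hC₀ : 0 ≤ C₀ := nonneg_of_norm_fourierMeasure_le hdecay
  have hη₀ : 0 ≤ η := (norm_nonneg _).trans hη
  have hentry : ∀ m ∈ S.erase n,
      ‖fourierMeasure μ (dispersiveFreq s m - dispersiveFreq s n)‖ ≤
        (if m = -n then η else 0) + C₀ * |(m : ℝ)| ^ (-(δ * (s - 1))) := by
    intro m hm
    obtain ⟨hmn, hmS⟩ := Finset.mem_erase.1 hm
    split_ifs with h
    · rw [h, dispersiveFreq_neg_sub, norm_fourierMeasure_neg]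
      exact hη.trans (le_add_of_nonneg_right (by positivity))
    · rw [zero_add]
      refine norm_fourierMeasure_dispersiveFreq_sub_le hδ hdecay hs (ne_of_mem_of_not_mem hmS hS) ?_
      exact fun habs => (abs_eq_abs.1 habs.symm).elim hmn h
  calc _ ≤ ∑ m ∈ S.erase n, ((if m = -n then η else 0) + C₀ * |(m : ℝ)| ^ (-(δ * (s - 1)))) :=
        Finset.sum_le_sum hentry
    _ ≤ η + C₀ * ∑ m ∈ S.erase n, |(m : ℝ)| ^ (-(δ * (s - 1))) := by
        rw [Finset.sum_add_distrib, Finset.sum_ite_eq', ← Finset.mul_sum]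
        gcongr
        split_ifs <;> simp [hη₀]
    _ ≤ η + C₀ * ∑ m ∈ S, |(m : ℝ)| ^ (-(δ * (s - 1))) := by
        gcongr
        exact Finset.erase_subset n S

lemma eventually_sum_erase_norm_fourierMeasure_dispersiveFreq_sub_le {ε : ℝ} (hδ : 0 < δ)
    (hε : 0 < ε) (hdecay : ∀ ξ : ℝ × ℝ, ‖fourierMeasure μ ξ‖ ≤ C₀ * (1 + ‖ξ‖) ^ (-δ))
    (hη : ∀ n : ℤ, 2 ≤ |n| → ‖fourierMeasure μ (0, 2 * n)‖ ≤ η) :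
    ∀ᶠ s : ℝ in atTop, ∀ S : Finset ℤ, (∀ n ∈ S, 2 ≤ |n|) → ∀ n ∈ S,
      ∑ m ∈ S.erase n, ‖fourierMeasure μ (dispersiveFreq s m - dispersiveFreq s n)‖ ≤ η + ε := by
  have hC₀ : 0 ≤ C₀ := nonneg_of_norm_fourierMeasure_le hdecay
  have hexponent : Tendsto (fun s : ℝ => δ * (s - 1)) atTop atTop :=
    (tendsto_atTop_add_const_right atTop (-1) tendsto_id).const_mul_atTop hδ
  filter_upwards [eventually_ge_atTop 1,
    hexponent.eventually (eventually_sum_abs_rpow_neg_le (div_pos hε (by positivity : 0 < C₀ + 1)))]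
    with s hs htail S hS n hn
  have hS₀ : 0 ∉ S := fun h => by simpa using hS 0 h
  calc _ ≤ η + C₀ * ∑ m ∈ S, |(m : ℝ)| ^ (-(δ * (s - 1))) :=
        sum_erase_norm_fourierMeasure_dispersiveFreq_sub_le hδ.le hdecay hs (hη n (hS n hn)) hS₀
    _ ≤ η + (C₀ + 1) * (ε / (C₀ + 1)) := by
        gcongr
        · linarith
        · exact htail S hS
    _ = η + ε := by rw [mul_div_cancel₀ ε (by positivity)]

end DispersiveFrequencies

theorem highfreq_measure_high_dispersion_general
    (μ : Measure (ℝ × ℝ)) [IsFiniteMeasure μ] {C₀ δ η ε : ℝ} (hδ : 0 < δ) (hε : 0 < ε)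
    (hdecay : ∀ ξ : ℝ × ℝ, ‖fourierMeasure μ ξ‖ ≤ C₀ * (1 + ‖ξ‖) ^ (-δ))
    (hη : ∀ n : ℤ, 2 ≤ |n| → ‖fourierMeasure μ (0, 2 * n)‖ ≤ η) :
    ∃ ζ : ℝ, 0 < ζ ∧ ∀ s : ℝ, ζ ≤ s →
      ∀ c : ℤ → ℂ, {n : ℤ | c n ≠ 0}.Finite → (∀ n : ℤ, |n| < 2 → c n = 0) →
        |(∫ z, ‖∑' n : ℤ, c n * planeWave (dispersiveFreq s n) z‖ ^ 2 ∂μ) -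
            μ.real Set.univ * ∑' n : ℤ, ‖c n‖ ^ 2| ≤
          (η + ε) * ∑' n : ℤ, ‖c n‖ ^ 2 := by
  obtain ⟨ζ, hζ⟩ := eventually_atTop.1
    (eventually_sum_erase_norm_fourierMeasure_dispersiveFreq_sub_le hδ hε hdecay hη)
  refine ⟨max ζ 1, by positivity, fun s hs c hfin hc => ?_⟩
  set S := hfin.toFinset
  have hcS : ∀ n ∉ S, c n = 0 := fun n hn => by simpa [S] using hn
  have hS : ∀ n ∈ S, 2 ≤ |n| := fun n hn =>
    not_lt.1 fun h => hfin.mem_toFinset.1 hn (hc n h)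
  have hnorm : ∑' n : ℤ, ‖c n‖ ^ 2 = ∑ n ∈ S, ‖c n‖ ^ 2 :=
    tsum_eq_sum fun n hn => by simp [hcS n hn]
  have hsum (z : ℝ × ℝ) : ∑' n : ℤ, c n * planeWave (dispersiveFreq s n) z =
      ∑ n ∈ S, c n * planeWave (dispersiveFreq s n) z :=
    tsum_eq_sum fun n hn => by simp [hcS n hn]
  simp only [hnorm, hsum]
  exact abs_integral_norm_sq_sum_planeWave_sub_le μ (hζ s (le_of_max_le_left hs) S hS) c

/-- **Theorem `thm:highfreqmeas`, second part**: for a fixed frequency cutoff `N ≥ 2`,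
if the dispersion exponent `s` is large enough (depending on `μ` and `N`), the
Riesz-system bounds hold with constants `(1−η)/2` and `(3+η)/2`. -/
theorem highfreq_measure_high_dispersion
    (μ : Measure (ℝ × ℝ)) [IsProbabilityMeasure μ]
    (C₀ δ η : ℝ) (hC₀ : 0 < C₀) (hδ : 0 < δ) (hη₀ : 0 < η) (hη₁ : η < 1)
    (hdecay : ∀ ξ : ℝ × ℝ, ‖fourierMeasure μ ξ‖ ≤ C₀ * (1 + ‖ξ‖) ^ (-δ))
    (hη : ∀ ξ : ℝ × ℝ, 1 ≤ ‖ξ‖ → ‖fourierMeasure μ ξ‖ ≤ η)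
    (N : ℕ) (hN : 2 ≤ N) :
    ∃ ζ : ℝ, 0 < ζ ∧ ∀ s : ℝ, ζ ≤ s →
      ∀ c : ℤ → ℂ, {n : ℤ | c n ≠ 0}.Finite →
        (∀ n : ℤ, |n| < (N : ℤ) → c n = 0) →
        ((1 - η) / 2) * (∑' n : ℤ, ‖c n‖ ^ 2) ≤
          (∫ z : ℝ × ℝ, ‖∑' n : ℤ, c n * Complex.exp (2 * Real.pi * Complex.I *
            (((|(n : ℝ)| ^ s : ℝ) : ℂ) * (z.1 : ℂ) + (n : ℂ) * (z.2 : ℂ)))‖ ^ 2 ∂μ) ∧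
        (∫ z : ℝ × ℝ, ‖∑' n : ℤ, c n * Complex.exp (2 * Real.pi * Complex.I *
            (((|(n : ℝ)| ^ s : ℝ) : ℂ) * (z.1 : ℂ) + (n : ℂ) * (z.2 : ℂ)))‖ ^ 2 ∂μ) ≤
          ((3 + η) / 2) * (∑' n : ℤ, ‖c n‖ ^ 2) := by
  have hη_antipodal (n : ℤ) (hn : 2 ≤ |n|) : ‖fourierMeasure μ (0, 2 * n)‖ ≤ η := by
    refine hη _ (le_trans ?_ (norm_snd_le _))
    have : (2 : ℝ) ≤ |(n : ℝ)| := mod_cast hn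
    simp only [norm_mul, Real.norm_ofNat, Real.norm_eq_abs]
    linarith
  obtain ⟨ζ, hζ, hbound⟩ := highfreq_measure_high_dispersion_general μ hδ
    (by linarith : 0 < (1 - η) / 2) hdecay hη_antipodal
  refine ⟨ζ, hζ, fun s hs c hfin hc => ?_⟩
  have h := abs_le.1 (hbound s hs c hfin fun n hn => hc n (by lia))
  simp only [planeWave_dispersiveFreq, probReal_univ] at h
  constructor <;> linarith
end

section
/- Let s > 1, α > 1, T > 0, and let p : [0,∞) → ℝ satisfy Assumption (H_α) with parameters 0 < c₁ < c₂ and c₃ > 0. Then there exists a constant C = C(p, T) ≥ 1 such that for all c_{−1}, c₀, c₁ ∈ ℂ, (1/C) ∑_{n=−1}^{1} |c_n|² ≤ ∫₀^T |∑_{n=−1}^{1} c_n e^{2πi(|n|^s t + n·p(t))}|² dt ≤ C ∑_{n=−1}^{1} |c_n|². -/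
open MeasureTheory Set

/-!
For finitely many linearly independent continuous functions on a compact interval, the `L²` norm of
a linear combination is comparable to the `ℓ²` norm of its coefficients, because norms on a
finite-dimensional space are equivalent. So only the linear independence of the three modes is
at stake. If `z e(φ) + w e(ψ) + u e(χ) = 0` on a connected set, with `e(x) = exp (2πix)`, then
`|z e(φ) + w e(ψ)| = |u|` is constant there; by the law of cosines, unless `z = 0` or `w = 0`, the
cosine of `2π(φ - ψ)` up to a fixed shift is constant, and continuity makes `φ - ψ` constant.
Hence three modes with pairwise nonconstant phase differences are linearly independent.

For the phases `t - p`, `0`, `t + p` this says that `p` must not be affine with slope `-1`, `0` or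
`1`. A curve satisfying `(H_α)` is not affine at all: its derivative tends to `0` at `0` but does
not vanish for `t > 0`.
-/

section FiniteFamilies

variable {𝕜 ι E X : Type*} [RCLike 𝕜] [NormedAddCommGroup E] [NormedSpace 𝕜 E]
  [MeasurableSpace X] {μ : Measure X}

theorem norm_toLp_two_sq {f : X → E} (hf : MemLp f 2 μ) :
    ‖hf.toLp f‖ ^ 2 = ∫ x, ‖f x‖ ^ 2 ∂μ := by
  rw [Lp.norm_toLp, hf.eLpNorm_eq_integral_rpow_norm two_ne_zero ENNReal.ofNat_ne_top,
    ENNReal.toReal_ofReal (by positivity), ← Real.rpow_mul_natCast (by positivity)]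
  simp

theorem sum_smul_toLp {q : ENNReal} {f : ι → X → E} (hf : ∀ i, MemLp (f i) q μ)
    (c : ι → 𝕜) (s : Finset ι) :
    ∑ i ∈ s, c i • (hf i).toLp (f i) =
      (memLp_finsetSum s fun i _ ↦ (hf i).const_smul (c i)).toLp
        (fun x ↦ ∑ i ∈ s, c i • f i x) := by
  classical
  induction s using Finset.induction_on with
  | empty => rfl
  | insert i s hi ih =>
    simp only [Finset.sum_insert hi, ih]
    rfl

variable [Fintype ι]

theorem exists_norm_sum_smul_sq_bounds {v : ι → E} (hv : LinearIndependent 𝕜 v) :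
    ∃ C : ℝ, 1 ≤ C ∧ ∀ c : ι → 𝕜,
      1 / C * ∑ i, ‖c i‖ ^ 2 ≤ ‖∑ i, c i • v i‖ ^ 2 ∧
      ‖∑ i, c i • v i‖ ^ 2 ≤ C * ∑ i, ‖c i‖ ^ 2 := by
  let L : EuclideanSpace 𝕜 ι →ₗ[𝕜] E :=
    Fintype.linearCombination 𝕜 v ∘ₗ (WithLp.linearEquiv 2 𝕜 (ι → 𝕜)).toLinearMap
  have hL : LinearMap.ker L = ⊥ := LinearMap.ker_eq_bot.2 <|
    hv.fintypeLinearCombination_injective.comp (WithLp.linearEquiv 2 𝕜 (ι → 𝕜)).injective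
  obtain ⟨K, -, hK⟩ := L.exists_antilipschitzWith hL
  let M : ℝ := ‖LinearMap.toContinuousLinearMap L‖
  refine ⟨max 1 (max (K ^ 2) (M ^ 2)), le_max_left _ _, fun c ↦ ?_⟩
  have hsum : ∑ i, ‖c i‖ ^ 2 = ‖WithLp.toLp 2 c‖ ^ 2 := (EuclideanSpace.norm_sq_eq _).symm
  have hLc : ∑ i, c i • v i = L (WithLp.toLp 2 c) := rfl
  rw [hsum, hLc, one_div_mul_eq_div, div_le_iff₀' (by positivity)]
  constructor
  · calc ‖WithLp.toLp 2 c‖ ^ 2 ≤ (K * ‖L (WithLp.toLp 2 c)‖) ^ 2 := by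
          gcongr; exact ZeroHomClass.bound_of_antilipschitz L hK _
      _ = K ^ 2 * ‖L (WithLp.toLp 2 c)‖ ^ 2 := mul_pow _ _ _
      _ ≤ _ := by gcongr; exact (le_max_left _ _).trans (le_max_right _ _)
  · calc ‖L (WithLp.toLp 2 c)‖ ^ 2 ≤ (M * ‖WithLp.toLp 2 c‖) ^ 2 := by
          gcongr; exact (LinearMap.toContinuousLinearMap L).le_opNorm _
      _ = M ^ 2 * ‖WithLp.toLp 2 c‖ ^ 2 := mul_pow _ _ _
      _ ≤ _ := by gcongr; exact (le_max_right _ _).trans (le_max_right _ _)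

theorem exists_integral_norm_sum_sq_bounds {f : ι → X → E}
    (hf : ∀ i, MemLp (f i) 2 μ)
    (hind : ∀ c : ι → 𝕜, (fun x ↦ ∑ i, c i • f i x) =ᵐ[μ] 0 → c = 0) :
    ∃ C : ℝ, 1 ≤ C ∧ ∀ c : ι → 𝕜,
      1 / C * ∑ i, ‖c i‖ ^ 2 ≤ ∫ x, ‖∑ i, c i • f i x‖ ^ 2 ∂μ ∧
      ∫ x, ‖∑ i, c i • f i x‖ ^ 2 ∂μ ≤ C * ∑ i, ‖c i‖ ^ 2 := by
  have hsum (c : ι → 𝕜) : MemLp (fun x ↦ ∑ i, c i • f i x) 2 μ :=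
    memLp_finsetSum _ fun i _ ↦ (hf i).const_smul (c i)
  have hsum_toLp (c : ι → 𝕜) : ∑ i, c i • (hf i).toLp (f i) = (hsum c).toLp _ :=
    sum_smul_toLp hf c Finset.univ
  have hli : LinearIndependent 𝕜 fun i ↦ (hf i).toLp (f i) :=
    Fintype.linearIndependent_iff.2 fun c hc ↦ congrFun <| hind c <|
      (MemLp.toLp_eq_toLp_iff (hsum c) MemLp.zero).1 (hsum_toLp c ▸ hc)
  simpa only [hsum_toLp, norm_toLp_two_sq] using exists_norm_sum_smul_sq_bounds hli

theorem exists_intervalIntegral_norm_sum_sq_bounds {a b : ℝ} (hab : a < b) {f : ι → ℝ → E}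
    (hf : ∀ i, ContinuousOn (f i) (Icc a b))
    (hind : ∀ c : ι → 𝕜, (∀ t ∈ Icc a b, ∑ i, c i • f i t = 0) → c = 0) :
    ∃ C : ℝ, 1 ≤ C ∧ ∀ c : ι → 𝕜,
      1 / C * ∑ i, ‖c i‖ ^ 2 ≤ ∫ t in a..b, ‖∑ i, c i • f i t‖ ^ 2 ∧
      ∫ t in a..b, ‖∑ i, c i • f i t‖ ^ 2 ≤ C * ∑ i, ‖c i‖ ^ 2 := by
  have hmem (i : ι) : MemLp (f i) 2 (volume.restrict (Icc a b)) :=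
    (memLp_two_iff_integrable_sq_norm ((hf i).aestronglyMeasurable measurableSet_Icc)).2
      ((hf i).norm.pow 2).integrableOn_Icc
  simp only [intervalIntegral.integral_of_le hab.le, ← integral_Icc_eq_integral_Ioc]
  refine exists_integral_norm_sum_sq_bounds hmem fun c hc ↦ hind c ?_
  exact Measure.eqOn_Icc_of_ae_eq volume hab.ne hc
    (continuousOn_finsetSum _ fun i _ ↦ (hf i).const_smul (c i)) continuousOn_const

end FiniteFamilies

section Phases

open Real FourierTransform

variable {X : Type*} [TopologicalSpace X] {S : Set X}

theorem countable_setOf_cos_eq (k : ℝ) : {x : ℝ | cos x = k}.Countable := by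
  rcases Set.eq_empty_or_nonempty {x : ℝ | cos x = k} with hempty | ⟨y, rfl⟩
  · simp [hempty]
  · refine ((countable_range fun m : ℤ ↦ 2 * m * π + y).union
      (countable_range fun m : ℤ ↦ 2 * m * π - y)).mono fun x hx ↦ ?_
    obtain ⟨m, hm | hm⟩ := cos_eq_cos_iff.1 (Eq.symm hx)
    · exact .inl ⟨m, hm.symm⟩
    · exact .inr ⟨m, hm.symm⟩

theorem subsingleton_image_of_cos_eq (hS : IsPreconnected S) {φ : X → ℝ}
    (hφ : ContinuousOn φ S) {k : ℝ} (hk : ∀ x ∈ S, cos (φ x) = k) : (φ '' S).Subsingleton :=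
  (countable_setOf_cos_eq k).isTotallyDisconnected _ (image_subset_iff.2 hk) (hS.image φ hφ)

theorem norm_mul_exp_add_mul_exp_sq (r s θ η : ℝ) :
    ‖(r * Complex.exp (θ * Complex.I) + s * Complex.exp (η * Complex.I) : ℂ)‖ ^ 2 =
      r ^ 2 + s ^ 2 + 2 * (r * s * cos (θ - η)) := by
  rw [Complex.sq_norm, Complex.normSq_apply, cos_sub]
  simp only [Complex.add_re, Complex.add_im, Complex.re_ofReal_mul, Complex.im_ofReal_mul,
    Complex.exp_ofReal_mul_I_re, Complex.exp_ofReal_mul_I_im]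
  linear_combination r ^ 2 * sin_sq_add_cos_sq θ + s ^ 2 * sin_sq_add_cos_sq η

theorem mul_fourierChar_eq_norm_mul_exp (z : ℂ) (x : ℝ) :
    z * 𝐞 x = ‖z‖ * Complex.exp ((z.arg + 2 * π * x : ℝ) * Complex.I) := by
  rw [fourierChar_apply, Complex.ofReal_add, add_mul, Complex.exp_add, ← mul_assoc,
    Complex.norm_mul_exp_arg_mul_I]

theorem norm_mul_fourierChar_add_mul_fourierChar_sq (z w : ℂ) (x y : ℝ) :
    ‖z * 𝐞 x + w * 𝐞 y‖ ^ 2 =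
      ‖z‖ ^ 2 + ‖w‖ ^ 2 + 2 * (‖z‖ * ‖w‖ * cos (z.arg - w.arg + 2 * π * (x - y))) := by
  rw [mul_fourierChar_eq_norm_mul_exp, mul_fourierChar_eq_norm_mul_exp,
    norm_mul_exp_add_mul_exp_sq]
  ring_nf

theorem eq_zero_or_eq_zero_of_norm_mul_fourierChar_add_eq (hS : IsPreconnected S) {φ ψ : X → ℝ}
    (hφ : ContinuousOn φ S) (hψ : ContinuousOn ψ S)
    (hne : ((fun x ↦ φ x - ψ x) '' S).Nontrivial) {z w : ℂ} {r : ℝ}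
    (h : ∀ x ∈ S, ‖z * 𝐞 (φ x) + w * 𝐞 (ψ x)‖ = r) : z = 0 ∨ w = 0 := by
  by_contra! hzw
  have hz : ‖z‖ ≠ 0 := norm_ne_zero_iff.2 hzw.1
  have hw : ‖w‖ ≠ 0 := norm_ne_zero_iff.2 hzw.2
  let θ : X → ℝ := fun x ↦ z.arg - w.arg + 2 * π * (φ x - ψ x)
  have hcos (x : X) (hx : x ∈ S) :
      cos (θ x) = (r ^ 2 - ‖z‖ ^ 2 - ‖w‖ ^ 2) / (2 * (‖z‖ * ‖w‖)) := by
    rw [← h x hx, norm_mul_fourierChar_add_mul_fourierChar_sq]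
    field_simp
    ring
  have hθ : (θ '' S).Subsingleton := subsingleton_image_of_cos_eq hS (by fun_prop) hcos
  refine Set.not_subsingleton_iff.2 hne ?_
  rintro _ ⟨x, hx, rfl⟩ _ ⟨y, hy, rfl⟩
  simpa [θ, pi_ne_zero] using hθ (mem_image_of_mem θ hx) (mem_image_of_mem θ hy)

theorem eq_zero_or_eq_zero_of_mul_fourierChar_add_eq_zero (hS : IsPreconnected S) {φ ψ χ : X → ℝ}
    (hφ : ContinuousOn φ S) (hψ : ContinuousOn ψ S)
    (hne : ((fun x ↦ φ x - ψ x) '' S).Nontrivial) {z w u : ℂ}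
    (h : ∀ x ∈ S, z * 𝐞 (φ x) + w * 𝐞 (ψ x) + u * 𝐞 (χ x) = 0) : z = 0 ∨ w = 0 := by
  refine eq_zero_or_eq_zero_of_norm_mul_fourierChar_add_eq hS hφ hψ hne (r := ‖u‖)
    fun x hx ↦ ?_
  rw [eq_neg_of_add_eq_zero_left (h x hx), norm_neg, norm_mul, Circle.norm_coe, mul_one]

theorem eq_zero_of_sum_mul_fourierChar_eq_zero (hS : IsPreconnected S) {φ : Fin 3 → X → ℝ}
    (hφ : ∀ i, ContinuousOn (φ i) S)
    (hne : Pairwise fun i j ↦ ((fun x ↦ φ i x - φ j x) '' S).Nontrivial)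
    {c : Fin 3 → ℂ} (hc : ∀ x ∈ S, ∑ i, c i * 𝐞 (φ i x) = 0) : c = 0 := by
  simp only [Fin.sum_univ_three] at hc
  have h01 : c 0 = 0 ∨ c 1 = 0 :=
    eq_zero_or_eq_zero_of_mul_fourierChar_add_eq_zero hS (hφ 0) (hφ 1) (hne (by decide)) hc
  have h02 : c 0 = 0 ∨ c 2 = 0 :=
    eq_zero_or_eq_zero_of_mul_fourierChar_add_eq_zero hS (hφ 0) (hφ 2) (hne (by decide))
      fun x hx ↦ (add_right_comm _ _ _).trans (hc x hx)
  have h12 : c 1 = 0 ∨ c 2 = 0 :=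
    eq_zero_or_eq_zero_of_mul_fourierChar_add_eq_zero hS (hφ 1) (hφ 2) (hne (by decide))
      fun x hx ↦ (add_rotate _ _ _).symm.trans (hc x hx)
  obtain ⟨x, hx⟩ : S.Nonempty := (hne (show (0 : Fin 3) ≠ 1 by decide)).nonempty.of_image
  have hcx := hc x hx
  have hc0 : c 0 = 0 := by
    by_contra h
    simp [h, h01.resolve_left h, h02.resolve_left h] at hcx
  have hc1 : c 1 = 0 := by
    by_contra h
    simp [h, hc0, h12.resolve_left h] at hcx
  have hc2 : c 2 = 0 := by simpa [hc0, hc1] using hcx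
  ext i
  fin_cases i <;> assumption

theorem exists_intervalIntegral_norm_sum_fourierChar_sq_bounds {a b : ℝ} (hab : a < b)
    {φ : Fin 3 → ℝ → ℝ} (hφ : ∀ i, ContinuousOn (φ i) (Icc a b))
    (hne : Pairwise fun i j ↦ ((fun t ↦ φ i t - φ j t) '' Icc a b).Nontrivial) :
    ∃ C : ℝ, 1 ≤ C ∧ ∀ c : Fin 3 → ℂ,
      1 / C * ∑ i, ‖c i‖ ^ 2 ≤ ∫ t in a..b, ‖∑ i, c i * 𝐞 (φ i t)‖ ^ 2 ∧
      ∫ t in a..b, ‖∑ i, c i * 𝐞 (φ i t)‖ ^ 2 ≤ C * ∑ i, ‖c i‖ ^ 2 :=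
  have hmodes (i : Fin 3) : ContinuousOn (fun t ↦ (𝐞 (φ i t) : ℂ)) (Icc a b) := by
    have := hφ i
    fun_prop
  exists_intervalIntegral_norm_sum_sq_bounds hab hmodes fun _ hc ↦
    eq_zero_of_sum_mul_fourierChar_eq_zero isPreconnected_Icc hφ hne hc

end Phases

section Modes

open Real FourierTransform

/-- The phase `|n| ^ s * t + n * p t` of the `n`-th mode at time `t` along the curve `p`, measured
in full turns: the mode itself is `𝐞 (modePhase s p n t)`, where `𝐞 x = exp (2πix)`. -/
noncomputable def modePhase (s : ℝ) (p : ℝ → ℝ) (n : ℤ) (t : ℝ) : ℝ :=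
  |(n : ℝ)| ^ s * t + n * p t

theorem coe_fourierChar_modePhase (s : ℝ) (p : ℝ → ℝ) (n : ℤ) (t : ℝ) :
    (𝐞 (modePhase s p n t) : ℂ) =
      Complex.exp (2 * π * Complex.I * ((|(n : ℝ)| ^ s : ℝ) * t + n * p t)) := by
  rw [fourierChar_apply, modePhase]
  push_cast
  ring_nf

/-- The slope `σ` such that the phases of the distinct modes `n` and `m` differ by a constant along
each curve `t ↦ σ * t + k`; it takes the junk value `0` for `n = m`. -/
noncomputable def resonantSlope (s : ℝ) (n m : ℤ) : ℝ :=
  (|(m : ℝ)| ^ s - |(n : ℝ)| ^ s) / (n - m)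

theorem modePhase_sub_modePhase (s : ℝ) (p : ℝ → ℝ) {n m : ℤ} (hnm : n ≠ m) (t : ℝ) :
    modePhase s p n t - modePhase s p m t = (n - m) * (p t - resonantSlope s n m * t) := by
  have hsub : (n - m : ℝ) ≠ 0 := sub_ne_zero.2 (Int.cast_injective.ne hnm)
  unfold modePhase resonantSlope
  field_simp
  ring

theorem nontrivial_image_modePhase_sub {s : ℝ} {p : ℝ → ℝ} {n m : ℤ} (hnm : n ≠ m) {S : Set ℝ}
    (hp : ((fun t ↦ p t - resonantSlope s n m * t) '' S).Nontrivial) :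
    ((fun t ↦ modePhase s p n t - modePhase s p m t) '' S).Nontrivial := by
  have hsub : (n - m : ℝ) ≠ 0 := sub_ne_zero.2 (Int.cast_injective.ne hnm)
  simp only [modePhase_sub_modePhase s p hnm]
  simpa only [image_image] using hp.image (mul_right_injective₀ hsub)

theorem resonantSlope_mem_of_mem_Icc {s : ℝ} (hs : 0 < s) {n m : ℤ}
    (hn : n ∈ Icc (-1) 1) (hm : m ∈ Icc (-1) 1) (hnm : n ≠ m) :
    resonantSlope s n m ∈ ({-1, 0, 1} : Set ℝ) := by
  obtain ⟨hn₁, hn₂⟩ := hn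
  obtain ⟨hm₁, hm₂⟩ := hm
  interval_cases n <;> interval_cases m <;> simp_all [resonantSlope, zero_rpow hs.ne']

theorem simple33_curve_general {s : ℝ} (hs : 0 < s) {a b : ℝ} (hab : a < b) {p : ℝ → ℝ}
    (hpc : ContinuousOn p (Icc a b))
    (hp : ∀ σ ∈ ({-1, 0, 1} : Set ℝ), ((fun t ↦ p t - σ * t) '' Icc a b).Nontrivial) :
    ∃ C : ℝ, 1 ≤ C ∧ ∀ cm c0 c1 : ℂ,
      1 / C * (‖cm‖ ^ 2 + ‖c0‖ ^ 2 + ‖c1‖ ^ 2) ≤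
        ∫ t in a..b, ‖cm * 𝐞 (modePhase s p (-1) t) + c0 * 𝐞 (modePhase s p 0 t) +
          c1 * 𝐞 (modePhase s p 1 t)‖ ^ 2 ∧
      ∫ t in a..b, ‖cm * 𝐞 (modePhase s p (-1) t) + c0 * 𝐞 (modePhase s p 0 t) +
          c1 * 𝐞 (modePhase s p 1 t)‖ ^ 2 ≤
        C * (‖cm‖ ^ 2 + ‖c0‖ ^ 2 + ‖c1‖ ^ 2) := by
  let n : Fin 3 → ℤ := ![-1, 0, 1]
  have hn (i : Fin 3) : n i ∈ Icc (-1) 1 := by fin_cases i <;> simp [n]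
  have hn_inj : Function.Injective n := by decide
  have hφ (i : Fin 3) : ContinuousOn (modePhase s p (n i)) (Icc a b) := by
    unfold modePhase
    fun_prop
  obtain ⟨C, hC, hbounds⟩ := exists_intervalIntegral_norm_sum_fourierChar_sq_bounds hab hφ
    fun i j hij ↦ nontrivial_image_modePhase_sub (hn_inj.ne hij)
      (hp _ (resonantSlope_mem_of_mem_Icc hs (hn i) (hn j) (hn_inj.ne hij)))
  refine ⟨C, hC, fun cm c0 c1 ↦ ?_⟩
  simpa [Fin.sum_univ_three, n] using hbounds ![cm, c0, c1]

end Modes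

section Curve

open Filter Topology

theorem deriv_eq_of_subsingleton_image_sub_mul {p : ℝ → ℝ} {a b σ t : ℝ}
    (hconst : ((fun t ↦ p t - σ * t) '' Icc a b).Subsingleton) (ht : t ∈ Ioo a b) :
    deriv p t = σ := by
  have hp_eq : p =ᶠ[𝓝 t] fun x ↦ σ * x + (p t - σ * t) := by
    filter_upwards [Icc_mem_nhds ht.1 ht.2] with x hx
    have hxt : p x - σ * x = p t - σ * t :=
      hconst (mem_image_of_mem _ hx) (mem_image_of_mem _ (Ioo_subset_Icc_self ht))
    linarith
  rw [hp_eq.deriv_eq]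
  simp

theorem tendsto_const_mul_rpow_nhdsGT_zero (c : ℝ) {r : ℝ} (hr : 0 < r) :
    Tendsto (fun t : ℝ ↦ c * t ^ r) (𝓝[>] 0) (𝓝 0) := by
  have hcont : ContinuousAt (fun t : ℝ ↦ c * t ^ r) 0 :=
    (Real.continuousAt_rpow_const 0 r (.inr hr.le)).const_mul c
  simpa [Real.zero_rpow hr.ne'] using hcont.tendsto.mono_left nhdsWithin_le_nhds

theorem AssumptionH.nontrivial_image_sub_mul {α c₁ c₂ c₃ T : ℝ} {p : ℝ → ℝ}
    (hp : AssumptionH α c₁ c₂ c₃ p) (hα : 1 < α) (hc₁ : 0 < c₁) (hT : 0 < T) (σ : ℝ) :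
    ((fun t ↦ p t - σ * t) '' Icc 0 T).Nontrivial := by
  obtain ⟨-, -, hbounds, -⟩ := hp
  by_contra hconst
  have hderiv {t : ℝ} (ht : t ∈ Ioo 0 T) : deriv p t = σ :=
    deriv_eq_of_subsingleton_image_sub_mul (not_nontrivial_iff.1 hconst) ht
  have hσ_nonpos : |σ| ≤ 0 := by
    refine ge_of_tendsto (tendsto_const_mul_rpow_nhdsGT_zero c₂ (sub_pos.2 hα)) ?_
    filter_upwards [Ioo_mem_nhdsGT hT] with t ht
    exact hderiv ht ▸ (hbounds t ht.1.le).2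
  have hmid : T / 2 ∈ Ioo 0 T := ⟨half_pos hT, half_lt_self hT⟩
  have hσ_pos : 0 < |σ| := calc
    0 < c₁ * (T / 2) ^ (α - 1) := by positivity
    _ ≤ |deriv p (T / 2)| := (hbounds _ hmid.1.le).1
    _ = |σ| := by rw [hderiv hmid]
  exact hσ_pos.not_ge hσ_nonpos

end Curve

/-- **Corollary `cor:simple33`**: along a curve satisfying `(H_α)`, for any time `T > 0`,
the three lowest modes satisfy a two-sided `ℓ²` estimate. -/
theorem simple33_curve
    (α s c₁ c₂ c₃ : ℝ) (hs : 1 < s) (hα : 1 < α) (T : ℝ) (hT : 0 < T)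
    (hc₁ : 0 < c₁) (hc₁₂ : c₁ < c₂) (hc₃ : 0 < c₃)
    (p : ℝ → ℝ) (hp : AssumptionH α c₁ c₂ c₃ p) :
    ∃ C : ℝ, 1 ≤ C ∧ ∀ cm c0 c1 : ℂ,
      (1 / C) * (‖cm‖ ^ 2 + ‖c0‖ ^ 2 + ‖c1‖ ^ 2) ≤
        (∫ t in (0:ℝ)..T,
          ‖cm * Complex.exp (2 * Real.pi * Complex.I *
              (((|((-1 : ℤ) : ℝ)| ^ s : ℝ) : ℂ) * (t : ℂ) + (-1 : ℂ) * (p t : ℂ))) +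
            c0 * Complex.exp (2 * Real.pi * Complex.I *
              (((|((0 : ℤ) : ℝ)| ^ s : ℝ) : ℂ) * (t : ℂ) + (0 : ℂ) * (p t : ℂ))) +
            c1 * Complex.exp (2 * Real.pi * Complex.I *
              (((|((1 : ℤ) : ℝ)| ^ s : ℝ) : ℂ) * (t : ℂ) + (1 : ℂ) * (p t : ℂ)))‖ ^ 2) ∧
      (∫ t in (0:ℝ)..T,
          ‖cm * Complex.exp (2 * Real.pi * Complex.I *
              (((|((-1 : ℤ) : ℝ)| ^ s : ℝ) : ℂ) * (t : ℂ) + (-1 : ℂ) * (p t : ℂ))) +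
            c0 * Complex.exp (2 * Real.pi * Complex.I *
              (((|((0 : ℤ) : ℝ)| ^ s : ℝ) : ℂ) * (t : ℂ) + (0 : ℂ) * (p t : ℂ))) +
            c1 * Complex.exp (2 * Real.pi * Complex.I *
              (((|((1 : ℤ) : ℝ)| ^ s : ℝ) : ℂ) * (t : ℂ) + (1 : ℂ) * (p t : ℂ)))‖ ^ 2) ≤
        C * (‖cm‖ ^ 2 + ‖c0‖ ^ 2 + ‖c1‖ ^ 2) := by
  simpa only [coe_fourierChar_modePhase, Int.cast_neg, Int.cast_one, Int.cast_zero] using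
    simple33_curve_general (zero_lt_one.trans hs) hT
      (hp.1.continuousOn.mono Icc_subset_Ici_self)
      fun σ _ ↦ hp.nontrivial_image_sub_mul hα hc₁ hT σ
end
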